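/- arXiv:1009.6139 — 2 statements merged into one kernel-verified Lean document; each statement's English description precedes it below -/
import Mathlib

section
/- Let α ∈ F(p) be a perfect continued fraction of type (p, l, k). (i) If a_j = λ_j A_{0,k} for 1 ≤ j ≤ l, then ν₀(α) = (p − 2k − 1)/l. (ii) If l = k = 1 and a₁ = λ₁ A_{i,1}, then ν₀(α) = (p−1)(p^{i+1} − 3p^i)/(p^{i+1} − 3p^i + 2). Consequently, if α is the power series with |α| > 1 satisfying −α⁴/12 − Tα³ + α² + 1 = 0 for p = 7 or p = 13, then ν(α) = 8/3. -/
/-!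
Put `P = (T² + s)^k` and `Q` the primitive of `(T² + s)^(k-1)` vanishing at `0`; the value
`s = -1` gives `P_k`, `Q_k`.

*Blocks.* Let `B₀ = T`, `B_{i+1} = [B_i^p / P]`. Since `B_i` is odd, the remainder of `B_i^p`
modulo `P` has a derivative proportional to `(T² + s)^(k-1)`, so it equals `c_i Q` (`div_step`).
Suppose `β_n^p = e P β_m + ε Q` and `a_n = λ B_i`. Removing `a_n^p` gives
`e P (β_m - e⁻¹ λ B_{i+1}) = β_{n+1}^{-p} - δ Q`, with
`δ = ε - λ c_i` a constant. If `δ ≠ 0`, the continued fraction of a multiple of `P / Q`, whose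
`2k` partial quotients `v_j T` come from a Riccati equation (`Ric.pq`), shows that
`a_m = e⁻¹ λ B_{i+1}`, `a_{m+j} = v_j T` for `1 ≤ j ≤ 2k`, and that a relation of the same shape
links `β_{n+1}` and `β_{m+2k+1}` (`block`). If `δ = 0`, then `a_{m+1}` has degree
`2k + p deg a_{n+1}` (`degenerate`), which is not the degree of any `A_{i,k}`; so a perfect
expansion never meets this case (`perfect_blocks`).

*The exponent.* Hence the degrees `d_n` of the partial quotients consist of `l` initial terms
followed by the blocks `p d_n - 2k, 1, …, 1`, one for each `n`. When the initial degrees are all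
equal to `E`, the partial sums satisfy `D_{l+(2k+1)N} = lE + p D_N`, from which
`d_{N+1} ≤ L D_N + E`, with equality infinitely often, where `L = ((p-1)E - 2k)/(lE)`; so the
upper limit of `d_{N+1} / D_N` is `L` (`limsup_blocks`). The first two claims are the cases
`E = 1` and `l = k = 1`, `E = deg A_{i,1}`.

*The quartic.* For `p = 7` and `p = 13` the quartic divides, modulo `p`, an equation of degree
`p + 1` in `α` expressing that `α = [λ₁T, …, λ_lT, β_{l+1}]` and
`α^p = e₁ P β_{l+1} + ε₁ Q`, with `(l, k, s) = (3, 2, -1)` and `(6, 4, 8)` respectively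
(`initial_rel`). It remains to see that `δ` never vanishes. This is done by propagating the
values `ε_n` (`Setup.next`): inside the block produced by `a_n` one finds
`ε_{f(n)+j} = 2 (j - 1 - 2k) / A_j`, so that `δ = -2j / A_j ≠ 0`, as soon as
`k s e_n ε_{f(n)} = ε_n`, and this identity passes from `n` to `n + 1` (`Setup.step`). Thus a
finite check on the initial data suffices (`Setup.of_initial`), and
`ν₀(α) = (p - 2k - 1)/l = 2/3` in both cases.
-/

noncomputable section
open Polynomial

def Tval (F : Type) [Field F] : LaurentSeries F :=
  (HahnSeries.single (1 : ℤ) (1 : F) : LaurentSeries F)⁻¹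

def adeg {F : Type} [Field F] (α : LaurentSeries F) : ℤ := -α.order

def pEval {F : Type} [Field F] (f : Polynomial F) : LaurentSeries F :=
  f.eval₂ HahnSeries.C (Tval F)

def pEvalHom (F : Type) [Field F] : Polynomial F →+* LaurentSeries F :=
  Polynomial.eval₂RingHom HahnSeries.C (Tval F)

/-- substitution `T ↦ v T` on Laurent series in `1/T`
(the underlying Hahn-series variable is `1/T`). -/
def scaleT {F : Type} [Field F] (v : F) (α : LaurentSeries F) : LaurentSeries F where
  coeff n := v ^ (-n) * α.coeff n
  isPWO_support' := α.isPWO_support'.mono (fun n hn => by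
    simp only [Function.mem_support, ne_eq] at hn ⊢
    intro h; exact hn (by rw [h, mul_zero]))

/-- coefficient-wise map of Laurent series along a ring homomorphism. -/
def lsMap {F L : Type} [Field F] [Field L] (f : F →+* L) (α : LaurentSeries F) :
    LaurentSeries L where
  coeff n := f (α.coeff n)
  isPWO_support' := α.isPWO_support'.mono (fun n hn => by
    simp only [Function.mem_support, ne_eq] at hn ⊢
    intro h; exact hn (by rw [h, map_zero]))

/-- integral (polynomial) part of a Laurent series in `1/T`. -/
def intPart {F : Type} [Field F] (α : LaurentSeries F) : Polynomial F :=
  ∑ j ∈ Finset.range ((-α.order).toNat + 1),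
    Polynomial.C (α.coeff (-(j : ℤ))) * Polynomial.X ^ j

def IsCFOf {F : Type} [Field F] (α : LaurentSeries F) (a : ℕ → Polynomial F)
    (β : ℕ → LaurentSeries F) : Prop :=
  β 1 = α ∧ ∀ n, 1 ≤ n →
    0 < (a n).degree ∧ 0 < adeg (β n) ∧ β n = pEval (a n) + (β (n + 1))⁻¹

def fcf {F : Type} [DivisionRing F] : List F → F
  | [] => 0
  | [c] => c
  | c :: d :: t => c + (fcf (d :: t))⁻¹

def fcfWD {F : Type} [DivisionRing F] : List F → Prop
  | [] => True
  | [_] => True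
  | _ :: d :: t => fcf (d :: t) ≠ 0 ∧ fcfWD (d :: t)

def polyInt {F : Type} [Field F] (f : Polynomial F) : Polynomial F :=
  ∑ i ∈ Finset.range (f.natDegree + 1),
    Polynomial.C (f.coeff i * ((i : F) + 1)⁻¹) * Polynomial.X ^ (i + 1)

def Pka {F : Type} [Field F] (k : ℕ) (a : F) : Polynomial F :=
  (Polynomial.X ^ 2 + Polynomial.C a) ^ k

def Qka {F : Type} [Field F] (k : ℕ) (a : F) : Polynomial F := polyInt (Pka (k - 1) a)

def Pk {F : Type} [Field F] (k : ℕ) : Polynomial F := (Polynomial.X ^ 2 - 1) ^ k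

def Qk {F : Type} [Field F] (k : ℕ) : Polynomial F := polyInt (Pk (k - 1))

def Aseq (F : Type) [Field F] (p k : ℕ) : ℕ → Polynomial F
  | 0 => Polynomial.X
  | i + 1 => Aseq F p k i ^ p / Pk k

def vseq (F : Type) [Field F] (k : ℕ) : ℕ → F
  | 0 => 1
  | 1 => 2 * k - 1
  | i + 1 =>
      (((2 * (k : ℤ) - 2 * i - 1) * (2 * (k : ℤ) - 2 * i + 1) : ℤ) : F) *
        (((i : F) * (2 * k - i))⁻¹) * (vseq F k i)⁻¹

def theta (F : Type) [Field F] (k : ℕ) : F :=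
  (-1) ^ k * ∏ j ∈ Finset.Icc 1 k, (1 - (2 * (j : F))⁻¹)

def continuant {R : Type} [CommRing R] (a : ℕ → R) (c0 c1 : R) : ℕ → R
  | 0 => c0
  | 1 => c1
  | n + 2 => a (n + 2) * continuant a c0 c1 (n + 1) + continuant a c0 c1 n

def largestPow (m N : ℕ) : ℕ := sSup {j : ℕ | m ^ j ∣ N}

def nu0 {F : Type} [Field F] (a : ℕ → Polynomial F) : ℝ :=
  Filter.limsup
    (fun n => ((a (n + 1)).natDegree : ℝ) / ∑ j ∈ Finset.Icc 1 n, ((a j).natDegree : ℝ))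
    Filter.atTop

/-- `α` (with continued fraction `(a, β)`) is a *perfect* continued fraction expansion of
type `(p, l, k)`: it is of type `(p, l, k)` and every partial quotient is proportional to
some `A_{i,k}`. -/
def PerfectType (p l k : ℕ) [Fact p.Prime] (α : LaurentSeries (ZMod p))
    (a : ℕ → Polynomial (ZMod p)) (β : ℕ → LaurentSeries (ZMod p)) : Prop :=
  IsCFOf α a β ∧
  (∃ ε₁ ε₂ : ZMod p, ε₁ ≠ 0 ∧ ε₂ ≠ 0 ∧
    α ^ p = HahnSeries.C ε₁ * pEval (Pk k) * β (l + 1) + HahnSeries.C ε₂ * pEval (Qk k)) ∧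
  ∀ n, 1 ≤ n → ∃ (lam : ZMod p) (i : ℕ), lam ≠ 0 ∧
    a n = Polynomial.C lam * Aseq (ZMod p) p k i


/-! ### Degrees of Laurent series in `1/T` -/

section Degree

variable {F : Type} [Field F]

lemma coeff_pEval (f : F[X]) (j : ℕ) : (pEval f).coeff (-(j : ℤ)) = f.coeff j := by
  have hT : ∀ n : ℕ, (Tval F) ^ n = HahnSeries.single (-(n : ℤ)) (1 : F) := by
    intro n
    have : Tval F = HahnSeries.single (-1 : ℤ) (1 : F) := by
      unfold Tval; rw [HahnSeries.inv_single]; simp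
    rw [this, HahnSeries.single_pow]; simp
  have h : ∀ (n : ℕ) (r : F), (HahnSeries.C r * Tval F ^ n : LaurentSeries F) =
      HahnSeries.single (-(n : ℤ)) r := by
    intro n r
    rw [hT, HahnSeries.C_apply, HahnSeries.single_mul_single]; simp
  induction f using Polynomial.induction_on' with
  | add p q hp hq =>
    simp only [pEval, eval₂_add, HahnSeries.coeff_add, coeff_add] at *
    rw [hp, hq]
  | monomial n r =>
    simp only [pEval, eval₂_monomial, h, coeff_monomial]
    rw [HahnSeries.coeff_single]
    by_cases hn : n = j
    · simp [hn]
    · rw [if_neg hn, if_neg (by omega)]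

/-- `DLt x d`: the series `x` has degree less than `d` (zero has degree `-∞`). -/
def DLt (x : LaurentSeries F) (d : ℤ) : Prop := ∀ n : ℤ, n ≤ -d → x.coeff n = 0

lemma DLt.add {x y : LaurentSeries F} {d : ℤ} (hx : DLt x d) (hy : DLt y d) : DLt (x + y) d :=
  fun n hn => by simp [hx n hn, hy n hn]

lemma DLt.sub {x y : LaurentSeries F} {d : ℤ} (hx : DLt x d) (hy : DLt y d) : DLt (x - y) d :=
  fun n hn => by simp [hx n hn, hy n hn]

lemma dlt_of_adeg {x : LaurentSeries F} {d : ℤ} (h : adeg x < d) : DLt x d := by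
  intro n hn
  apply HahnSeries.coeff_eq_zero_of_lt_order
  unfold adeg at h; omega

lemma adeg_add {x y : LaurentSeries F} (hx : x ≠ 0) (hy : DLt y (adeg x)) :
    adeg (x + y) = adeg x := by
  have h1 : (x + y).coeff x.order ≠ 0 := by
    rw [HahnSeries.coeff_add, hy x.order (by simp [adeg]), add_zero]
    exact HahnSeries.coeff_order_eq_zero.not.mpr hx
  have hxy : x + y ≠ 0 := fun h => h1 (by rw [h]; rfl)
  have h2 := HahnSeries.order_le_of_coeff_ne_zero h1
  have h3 : x.order ≤ (x + y).order := by
    by_contra hlt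
    push Not at hlt
    have h4 := HahnSeries.coeff_order_eq_zero.not.mpr hxy
    apply h4
    rw [HahnSeries.coeff_add, HahnSeries.coeff_eq_zero_of_lt_order hlt, zero_add]
    exact hy _ (by simp only [adeg]; omega)
  simp only [adeg]; omega

lemma adeg_mul {x y : LaurentSeries F} (hx : x ≠ 0) (hy : y ≠ 0) :
    adeg (x * y) = adeg x + adeg y := by
  simp only [adeg, HahnSeries.order_mul hx hy]; ring

lemma adeg_one : adeg (1 : LaurentSeries F) = 0 := by simp [adeg]

lemma adeg_inv (x : LaurentSeries F) : adeg x⁻¹ = -adeg x := by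
  by_cases hx : x = 0
  · simp [hx, adeg]
  have h := adeg_mul hx (inv_ne_zero hx)
  rw [mul_inv_cancel₀ hx, adeg_one] at h
  omega

lemma adeg_pow (x : LaurentSeries F) (n : ℕ) : adeg (x ^ n) = n * adeg x := by
  simp [adeg]

lemma ne_zero_of_adeg {x : LaurentSeries F} (h : 0 < adeg x) : x ≠ 0 := by
  rintro rfl; simp [adeg] at h

lemma dlt_inv {x : LaurentSeries F} (h : 0 < adeg x) : DLt x⁻¹ 0 :=
  dlt_of_adeg (by rw [adeg_inv]; omega)

lemma pEval_hom (f : F[X]) : pEval f = pEvalHom F f := rfl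

lemma pEval_inj {f : F[X]} (h : DLt (pEval f) 0) : f = 0 := by
  ext j
  rw [← coeff_pEval, h _ (by omega), coeff_zero]

lemma pEval_ne {f : F[X]} (h : f ≠ 0) : pEval f ≠ 0 := fun h0 =>
  h (pEval_inj (by rw [h0]; intro n _; rfl))

lemma pEval_dlt (f : F[X]) (d : ℕ) (h : f.natDegree < d) : DLt (pEval f) d := by
  intro n hn
  obtain ⟨j, hj⟩ : ∃ j : ℕ, n = -(j : ℤ) := ⟨(-n).toNat, by omega⟩
  rw [hj, coeff_pEval]
  exact coeff_eq_zero_of_natDegree_lt (by omega)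

lemma adeg_pEval {f : F[X]} (h : f ≠ 0) : adeg (pEval f) = f.natDegree := by
  have h1 : (pEval f).coeff (-(f.natDegree : ℤ)) ≠ 0 := by
    rw [coeff_pEval]; simpa using h
  have h2 := HahnSeries.order_le_of_coeff_ne_zero h1
  have h3 : -(f.natDegree : ℤ) ≤ (pEval f).order := by
    by_contra hlt
    push Not at hlt
    apply HahnSeries.coeff_order_eq_zero.not.mpr (pEval_ne h)
    exact pEval_dlt f (f.natDegree + 1) (by omega) _ (by push_cast; omega)
  simp only [adeg]; omega

lemma pEval_C (r : F) : pEval (C r) = HahnSeries.C r := by simp [pEval]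

lemma adeg_C {r : F} (h : r ≠ 0) : adeg (HahnSeries.C r : LaurentSeries F) = 0 := by
  rw [← pEval_C, adeg_pEval (C_ne_zero.mpr h)]; simp

end Degree

/-! ### Uniqueness of the continued fraction expansion -/

section CF

variable {F : Type} [Field F]

lemma cf_unique {α : LaurentSeries F} {a : ℕ → F[X]} {β : ℕ → LaurentSeries F}
    (h : IsCFOf α a β) {n : ℕ} (hn : 1 ≤ n) {b : F[X]} {g : LaurentSeries F}
    (hg : 0 < adeg g) (hb : β n = pEval b + g⁻¹) : a n = b ∧ β (n + 1) = g := by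
  obtain ⟨-, -, h3⟩ := h.2 n hn
  obtain ⟨-, h4, -⟩ := h.2 (n + 1) (by omega)
  have h5 : pEval (a n - b) = g⁻¹ - (β (n + 1))⁻¹ := by
    rw [pEval_hom, map_sub, ← pEval_hom, ← pEval_hom]
    linear_combination hb - h3
  have h6 : a n = b := sub_eq_zero.mp
    (pEval_inj (by rw [h5]; exact (dlt_inv hg).sub (dlt_inv h4)))
  refine ⟨h6, ?_⟩
  rw [h6, sub_self] at h5
  have : g⁻¹ - (β (n + 1))⁻¹ = 0 := by rw [← h5]; simp [pEval]
  exact inv_injective (sub_eq_zero.mp this).symm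

lemma cf_adeg {α : LaurentSeries F} {a : ℕ → F[X]} {β : ℕ → LaurentSeries F}
    (h : IsCFOf α a β) {n : ℕ} (hn : 1 ≤ n) :
    1 ≤ (a n).natDegree ∧ adeg (β n) = (a n).natDegree := by
  obtain ⟨h1, -, h3⟩ := h.2 n hn
  obtain ⟨-, h4, -⟩ := h.2 (n + 1) (by omega)
  have h5 : 0 < (a n).natDegree := natDegree_pos_iff_degree_pos.mpr h1
  have h6 : a n ≠ 0 := by rintro h; simp [h] at h1
  refine ⟨h5, ?_⟩
  rw [h3, adeg_add (pEval_ne h6), adeg_pEval h6]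
  rw [adeg_pEval h6]
  exact fun m hm => dlt_inv h4 m (by omega)

/-- The finite continued fraction `[v₁T, …, v_N T, h]`. -/
def cfE (v : ℕ → F) : ℕ → LaurentSeries F → LaurentSeries F
  | 0, h => h
  | N + 1, h => cfE v N (pEval (C (v (N + 1)) * X) + h⁻¹)

lemma adeg_lin {c : F} (hc : c ≠ 0) {h : LaurentSeries F} (hh : 0 < adeg h) :
    0 < adeg (pEval (C c * X) + h⁻¹) := by
  have h0 : (C c * X : F[X]) ≠ 0 := mul_ne_zero (C_ne_zero.mpr hc) X_ne_zero
  have h1 : adeg (pEval (C c * X)) = 1 := by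
    rw [adeg_pEval h0, natDegree_C_mul_X _ hc]; rfl
  rw [adeg_add (pEval_ne h0)]
  · omega
  · rw [h1]; exact fun m hm => dlt_inv hh m (by omega)

lemma adeg_cfE (v : ℕ → F) : ∀ (N : ℕ) (h : LaurentSeries F), (∀ j, 1 ≤ j → j ≤ N → v j ≠ 0) →
    0 < adeg h → 0 < adeg (cfE v N h)
  | 0, _, _, hh => hh
  | N + 1, _, hv, hh => adeg_cfE v N _ (fun j h1 h2 => hv j h1 (by omega))
      (adeg_lin (hv (N + 1) (by omega) le_rfl) hh)

lemma cf_chain {α : LaurentSeries F} {a : ℕ → F[X]} {β : ℕ → LaurentSeries F}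
    (hcf : IsCFOf α a β) {m : ℕ} (hm : 1 ≤ m) (v : ℕ → F) :
    ∀ (N : ℕ) (h : LaurentSeries F), (∀ j, 1 ≤ j → j ≤ N → v j ≠ 0) → 0 < adeg h →
      β m = cfE v N h →
      (∀ j, 1 ≤ j → j ≤ N → a (m + j - 1) = C (v j) * X) ∧ β (m + N) = h := by
  intro N
  induction N with
  | zero => intro h _ _ hb; exact ⟨fun j h1 h2 => by omega, hb⟩
  | succ N ih =>
    intro h hv hh hb
    obtain ⟨h1, h2⟩ := ih _ (fun j h1 h2 => hv j h1 (by omega))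
      (adeg_lin (hv (N + 1) (by omega) le_rfl) hh) hb
    obtain ⟨h3, h4⟩ := cf_unique hcf (by omega) hh h2
    refine ⟨fun j hj1 hj2 => ?_, h4⟩
    rcases Nat.lt_or_ge j (N + 1) with hj | hj
    · exact h1 j hj1 (by omega)
    · obtain rfl : j = N + 1 := by omega
      exact h3

/-- Solutions of the continuant recursion `u_{n+1} = v_n T u_n + u_{n-1}`, with the initial
values `x`, `y` at the indices `0`, `1`. -/
def cnt (v : ℕ → F) (x y : F[X]) : ℕ → F[X]
  | 0 => x
  | 1 => y
  | n + 2 => C (v (n + 1)) * X * cnt v x y (n + 1) + cnt v x y n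

lemma cfE_eq (v : ℕ → F) : ∀ (N : ℕ) (h : LaurentSeries F), (∀ j, 1 ≤ j → j ≤ N → v j ≠ 0) →
    0 < adeg h → cfE v N h =
      (pEval (cnt v 0 1 (N + 1)) * h + pEval (cnt v 0 1 N)) /
      (pEval (cnt v 1 0 (N + 1)) * h + pEval (cnt v 1 0 N)) := by
  intro N
  induction N with
  | zero => intro h _ _; simp [cfE, cnt, pEval]
  | succ N ih =>
    intro h hv hh
    have h0 := ne_zero_of_adeg hh
    rw [cfE, ih _ (fun j h1 h2 => hv j h1 (by omega))
      (adeg_lin (hv (N + 1) (by omega) le_rfl) hh), ← mul_div_mul_right _ _ h0]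
    simp only [cnt, pEval_hom, map_add, map_mul]
    congr 1 <;> field_simp <;> ring

lemma cnt_det (v : ℕ → F) (n : ℕ) :
    cnt v 0 1 (n + 1) * cnt v 1 0 n - cnt v 0 1 n * cnt v 1 0 (n + 1) = (-1) ^ n := by
  induction n with
  | zero => simp [cnt]
  | succ n ih => simp only [cnt]; rw [pow_succ]; linear_combination -ih

end CF

/-! ### The continued fraction of `P_k / Q_k` -/

section PQ

variable {p : ℕ} [Fact p.Prime]

lemma Pka_monic (k : ℕ) (a : ZMod p) : (Pka k a).Monic := by
  unfold Pka; exact (monic_X_pow_add_C a two_ne_zero).pow k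

lemma Pka_natDegree (k : ℕ) (a : ZMod p) : (Pka k a).natDegree = 2 * k := by
  unfold Pka
  rw [natDegree_pow, natDegree_X_pow_add_C, mul_comm]

lemma Pka_derivative (k : ℕ) (a : ZMod p) :
    derivative (Pka k a) = 2 * (k : (ZMod p)[X]) * X * Pka (k - 1) a := by
  unfold Pka
  rw [derivative_pow]
  simp
  ring

lemma Pka_succ (k : ℕ) (hk : 1 ≤ k) (a : ZMod p) :
    Pka k a = (X ^ 2 + C a) * Pka (k - 1) a := by
  unfold Pka
  obtain ⟨m, rfl⟩ : ∃ m, k = m + 1 := ⟨k - 1, by omega⟩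
  rw [pow_succ']; simp

lemma natCast_ne {n : ℕ} (h0 : 0 < n) (h1 : n < p) : (n : ZMod p) ≠ 0 := by
  rw [Ne, ZMod.natCast_eq_zero_iff]
  exact fun h => absurd (Nat.le_of_dvd h0 h) (by omega)

lemma polyInt_natDegree (f : (ZMod p)[X]) : (polyInt f).natDegree ≤ f.natDegree + 1 := by
  unfold polyInt
  apply natDegree_sum_le_of_forall_le
  intro i hi
  rw [Finset.mem_range] at hi
  exact (natDegree_C_mul_X_pow_le _ _).trans (by omega)

lemma polyInt_derivative (f : (ZMod p)[X]) (hf : f.natDegree + 1 < p) :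
    derivative (polyInt f) = f := by
  unfold polyInt
  rw [derivative_sum]
  conv_rhs => rw [f.as_sum_range_C_mul_X_pow]
  apply Finset.sum_congr rfl
  intro i hi
  rw [Finset.mem_range] at hi
  have h : ((i : ZMod p) + 1) ≠ 0 := by
    have := natCast_ne (p := p) (n := i + 1) (by omega) (by omega)
    simpa using this
  rw [derivative_C_mul_X_pow]
  congr 2
  push_cast
  field_simp

lemma polyInt_eval (f : (ZMod p)[X]) : (polyInt f).eval 0 = 0 := by
  unfold polyInt; simp [eval_finsetSum]

lemma Qka_natDegree (k : ℕ) (hk : 1 ≤ k) (a : ZMod p) : (Qka k a).natDegree ≤ 2 * k - 1 := by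
  unfold Qka
  refine (polyInt_natDegree _).trans ?_
  rw [Pka_natDegree]; omega

lemma Qka_derivative (k : ℕ) (hk : 1 ≤ k) (hkp : 2 * k < p) (a : ZMod p) :
    derivative (Qka k a) = Pka (k - 1) a := by
  unfold Qka
  apply polyInt_derivative
  rw [Pka_natDegree]; omega

/-- In characteristic `p`, a polynomial of degree less than `p` is determined by its derivative
and its value at `0`. -/
lemma eq_of_derivative {f g : (ZMod p)[X]} (hf : f.natDegree < p) (hg : g.natDegree < p)
    (h : derivative f = derivative g) (h0 : f.eval 0 = g.eval 0) : f = g := by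
  ext n
  rcases n with _ | n
  · rwa [coeff_zero_eq_eval_zero, coeff_zero_eq_eval_zero]
  rcases Nat.lt_or_ge (n + 1) p with hn | hn
  · have h1 := congrArg (fun q => q.coeff n) h
    simp only [coeff_derivative] at h1
    have := natCast_ne (p := p) (n := n + 1) (by omega) hn
    push_cast at this
    exact mul_right_cancel₀ this h1
  · rw [coeff_eq_zero_of_natDegree_lt (by omega), coeff_eq_zero_of_natDegree_lt (by omega)]

/-- The polynomial solutions of degree at most `2k` of the equation satisfied by `P_k` are
determined by their coefficient of degree `2k`. -/
lemma eq_zero_of_ode {k : ℕ} (hkp : 2 * k < p) {a : ZMod p} {r : (ZMod p)[X]}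
    (hr : r.natDegree ≤ 2 * k) (hc : r.coeff (2 * k) = 0)
    (h : (X ^ 2 + C a) * derivative r = 2 * (k : (ZMod p)[X]) * X * r) : r = 0 := by
  by_contra h0
  set d := r.natDegree with hd
  have hlc : r.coeff d ≠ 0 := by simpa [hd] using h0
  have hd2 : d < 2 * k := by
    rcases Nat.lt_or_ge d (2 * k) with h | h
    · exact h
    · exact absurd (by rwa [show d = 2 * k by omega]) hlc
  have h1 := congrArg (fun q => q.coeff (d + 1)) h
  have e1 : ((X ^ 2 + C a) * derivative r).coeff (d + 1) = r.coeff d * d := by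
    rw [add_mul, coeff_add, coeff_C_mul, coeff_derivative, coeff_eq_zero_of_natDegree_lt
      (show r.natDegree < d + 1 + 1 by omega)]
    rcases d with _ | d
    · rw [show (0 + 1) = 1 from rfl, pow_two, mul_assoc, coeff_X_mul]; simp
    · rw [show d + 1 + 1 = d + 2 from rfl, coeff_X_pow_mul, coeff_derivative]; simp
  have e2 : (2 * (k : (ZMod p)[X]) * X * r).coeff (d + 1) = (2 * k : ℕ) * r.coeff d := by
    rw [show 2 * (k : (ZMod p)[X]) * X * r = C ((2 * k : ℕ) : ZMod p) * (X * r) by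
      simp only [Nat.cast_mul, map_mul, map_natCast, Nat.cast_ofNat, map_ofNat]; ring,
      coeff_C_mul, coeff_X_mul]
  simp only [e1, e2] at h1
  have h2 : ((2 * k - d : ℕ) : ZMod p) * r.coeff d = 0 := by
    rw [Nat.cast_sub hd2.le]; linear_combination -h1
  rcases mul_eq_zero.mp h2 with h3 | h3
  · exact natCast_ne (by omega) (by omega) h3
  · exact hlc h3

/-- Coefficients of the Riccati equations `(T² + a) g' = A_j g² + (2k - 2(j-1)) T g - A_{j-1}`
satisfied by the complete quotients of a multiple of `P_k / Q_k`, whose partial quotients are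
`v_j T`. -/
structure Ric (k : ℕ) (a : ZMod p) (A v : ℕ → ZMod p) : Prop where
  zero : A 0 = 0
  ne : ∀ j, 1 ≤ j → j ≤ 2 * k → A j ≠ 0
  mulrec : ∀ j, j ≤ 2 * k → A (j + 1) * A j = a * j * (j - 2 * k)
  val : ∀ j, 1 ≤ j → j ≤ 2 * k → v j * A j = 2 * j - 1 - 2 * k

namespace Ric

variable {k : ℕ} {a : ZMod p} {A v : ℕ → ZMod p}

lemma v_ne (h : Ric k a A v) (hkp : 2 * k < p) {j : ℕ} (h1 : 1 ≤ j)
    (h2 : j ≤ 2 * k) : v j ≠ 0 := by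
  intro h0
  have h3 := h.val j h1 h2
  rw [h0, zero_mul] at h3
  have h4 : ((2 * j - 1 - 2 * k : ℤ) : ZMod p) = 0 := by push_cast; exact h3.symm
  rw [ZMod.intCast_zmod_eq_zero_iff_dvd] at h4
  have h5 := Int.eq_zero_of_abs_lt_dvd h4 (by rw [abs_lt]; constructor <;> omega)
  omega

lemma last (h : Ric k a A v) (hk : 1 ≤ k) : A (2 * k + 1) = 0 := by
  have h1 := h.mulrec (2 * k) le_rfl
  have h2 := h.ne (2 * k) (by omega) le_rfl
  have h3 : A (2 * k + 1) * A (2 * k) = 0 := by rw [h1]; push_cast; ring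
  exact (mul_eq_zero.mp h3).resolve_right h2

lemma step (h : Ric k a A v) {n : ℕ} (hn : n + 1 ≤ 2 * k) :
    A (n + 2) = a * v (n + 1) + A n := by
  apply mul_right_cancel₀ (h.ne (n + 1) (by omega) hn)
  have h1 := h.mulrec (n + 1) hn
  have h2 := h.mulrec n (by omega)
  have h3 := h.val (n + 1) (by omega) hn
  push_cast at h1 h3
  linear_combination h1 - h2 - a * h3

lemma ode_p (h : Ric k a A v) {n : ℕ} (hn : n ≤ 2 * k) :
    (X ^ 2 + C a) * derivative (cnt v 0 1 (n + 1)) =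
      (n : (ZMod p)[X]) * X * cnt v 0 1 (n + 1) + C (A (n + 1)) * cnt v 0 1 n ∧
    (X ^ 2 + C a) * derivative (cnt v 0 1 n) =
      (2 * k - n : (ZMod p)[X]) * X * cnt v 0 1 n + C (A n) * cnt v 0 1 (n + 1) := by
  induction n with
  | zero => simp [cnt, h.zero]
  | succ n ih =>
    obtain ⟨i1, i2⟩ := ih (by omega)
    have h3 := congrArg C (h.val (n + 1) (by omega) hn)
    have h4 := congrArg C (h.step hn)
    simp only [map_add, map_mul, map_sub, map_natCast, map_one, map_ofNat] at h3 h4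
    push_cast at h3 ⊢
    constructor
    · simp only [cnt, derivative_add, derivative_mul, derivative_C, derivative_X]
      linear_combination (C (v (n + 1)) * X) * i1 + i2
        + (-cnt v 0 1 (n + 1)) * h4 + X * cnt v 0 1 n * h3
    · rw [i1]
      simp only [cnt]
      linear_combination (-X * cnt v 0 1 (n + 1)) * h3

lemma ode_q (h : Ric k a A v) {n : ℕ} (hn : n ≤ 2 * k) :
    (X ^ 2 + C a) * derivative (cnt v 1 0 (n + 1)) =
      (n - 2 * k : (ZMod p)[X]) * X * cnt v 1 0 (n + 1) + C (A (n + 1)) * cnt v 1 0 n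
        - C (A 1) * cnt v 0 1 (n + 1) ∧
    (X ^ 2 + C a) * derivative (cnt v 1 0 n) =
      (-n : (ZMod p)[X]) * X * cnt v 1 0 n + C (A n) * cnt v 1 0 (n + 1)
        - C (A 1) * cnt v 0 1 n := by
  induction n with
  | zero => simp [cnt, h.zero]
  | succ n ih =>
    obtain ⟨i1, i2⟩ := ih (by omega)
    have h3 := congrArg C (h.val (n + 1) (by omega) hn)
    have h4 := congrArg C (h.step hn)
    simp only [map_add, map_mul, map_sub, map_natCast, map_one, map_ofNat] at h3 h4
    push_cast at h3 ⊢
    constructor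
    · simp only [cnt, derivative_add, derivative_mul, derivative_C, derivative_X]
      linear_combination (C (v (n + 1)) * X) * i1 + i2
        + (-cnt v 1 0 (n + 1)) * h4 + X * cnt v 1 0 n * h3
    · rw [i1]
      simp only [cnt]
      linear_combination (-X * cnt v 1 0 (n + 1)) * h3

end Ric

lemma cnt_p_natDegree (v : ℕ → ZMod p) (n : ℕ) :
    (cnt v 0 1 n).natDegree ≤ n - 1 ∧ (cnt v 0 1 (n + 1)).natDegree ≤ n := by
  induction n with
  | zero => simp [cnt]
  | succ n ih =>
    refine ⟨ih.2, ?_⟩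
    simp only [cnt]
    refine (natDegree_add_le _ _).trans (max_le ?_ (ih.1.trans (by omega)))
    refine natDegree_mul_le.trans ?_
    have := (natDegree_C_mul_le (v (n + 1)) X).trans natDegree_X_le
    omega

lemma cnt_q_natDegree (v : ℕ → ZMod p) (n : ℕ) :
    (cnt v 1 0 (n + 1)).natDegree ≤ n - 1 ∧ (cnt v 1 0 (n + 2)).natDegree ≤ n := by
  induction n with
  | zero => simp [cnt]
  | succ n ih =>
    refine ⟨ih.2, ?_⟩
    rw [cnt]
    refine (natDegree_add_le _ _).trans (max_le ?_ (ih.1.trans (by omega)))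
    refine natDegree_mul_le.trans ?_
    have := (natDegree_C_mul_le (v (n + 1 + 1)) X).trans natDegree_X_le
    have h2 : (cnt v 1 0 (n + 1 + 1)).natDegree ≤ n := ih.2
    omega

lemma cnt_eval (v : ℕ → ZMod p) (n : ℕ) :
    (cnt v 0 1 (2 * n)).eval 0 = 0 ∧ (cnt v 1 0 (2 * n + 1)).eval 0 = 0 := by
  induction n with
  | zero => simp [cnt]
  | succ n ih =>
    rw [show 2 * (n + 1) = 2 * n + 2 by ring, show 2 * n + 2 + 1 = 2 * n + 1 + 2 by ring]
    rw [cnt, cnt]; simp [ih.1, ih.2]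

/-- The four continuants of length about `2k` are multiples of `P_k` and `Q_k`: this is the
continued fraction of `P_k / Q_k`, up to a constant factor. -/
lemma Ric.pq {k : ℕ} {a : ZMod p} {A v : ℕ → ZMod p} (h : Ric k a A v) (hk : 1 ≤ k)
    (hkp : 2 * k < p) : ∃ W : ZMod p, W ≠ 0 ∧
      cnt v 0 1 (2 * k + 1) = C W * Pka k a ∧
      cnt v 0 1 (2 * k) = C (A (2 * k) * W) * Qka k a ∧
      cnt v 1 0 (2 * k + 1) = C (-A 1 * W) * Qka k a ∧
      C W * Pka k a * cnt v 1 0 (2 * k) + C (A 1 * A (2 * k) * W ^ 2) * Qka k a ^ 2 = 1 := by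
  have hS : (X ^ 2 + C a : (ZMod p)[X]) ≠ 0 := (monic_X_pow_add_C a two_ne_zero).ne_zero
  set W := (cnt v 0 1 (2 * k + 1)).coeff (2 * k) with hW
  have hP := Pka_succ k hk a
  have hP' := Pka_derivative k a
  have hQ' := Qka_derivative k hk hkp a
  have hQd := Qka_natDegree k hk a
  obtain ⟨o1, o2⟩ := h.ode_p (n := 2 * k) le_rfl
  obtain ⟨o3, -⟩ := h.ode_q (n := 2 * k) le_rfl
  rw [h.last hk] at o1 o3
  push_cast at o1 o2 o3
  simp only [map_zero, zero_mul, add_zero, sub_self, zero_add, zero_sub] at o1 o2 o3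
  have r1 : cnt v 0 1 (2 * k + 1) = C W * Pka k a := by
    apply sub_eq_zero.mp
    apply eq_zero_of_ode hkp (a := a)
    · refine (natDegree_sub_le _ _).trans (max_le (cnt_p_natDegree v _).2 ?_)
      exact (natDegree_C_mul_le _ _).trans (Pka_natDegree k a).le
    · have : (Pka k a).coeff (2 * k) = 1 := by
        rw [← Pka_natDegree k a]; exact Pka_monic k a
      rw [coeff_sub, coeff_C_mul, this, hW]; ring
    · rw [derivative_sub, derivative_C_mul, hP']
      linear_combination o1 + 2 * (k : (ZMod p)[X]) * X * C W * hP
  have r2 : cnt v 0 1 (2 * k) = C (A (2 * k) * W) * Qka k a := by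
    apply eq_of_derivative
    · exact (cnt_p_natDegree v _).1.trans_lt (by omega)
    · exact (natDegree_C_mul_le _ _).trans_lt (by omega)
    · apply mul_left_cancel₀ hS
      rw [derivative_C_mul, hQ', o2, r1, hP, C_mul]; ring
    · rw [(cnt_eval v k).1, eval_C_mul, Qka, polyInt_eval, mul_zero]
  have r3 : cnt v 1 0 (2 * k + 1) = C (-A 1 * W) * Qka k a := by
    apply eq_of_derivative
    · exact (cnt_q_natDegree v _).1.trans_lt (by omega)
    · exact (natDegree_C_mul_le _ _).trans_lt (by omega)
    · apply mul_left_cancel₀ hS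
      rw [derivative_C_mul, hQ', o3, r1, hP, C_mul, C_neg]; ring
    · rw [(cnt_eval v k).2, eval_C_mul, Qka, polyInt_eval, mul_zero]
  have hdet := cnt_det v (2 * k)
  rw [r1, r2, r3] at hdet
  have h4 : C W * Pka k a * cnt v 1 0 (2 * k) + C (A 1 * A (2 * k) * W ^ 2) * Qka k a ^ 2 = 1 := by
    have e : ((-1 : (ZMod p)[X])) ^ (2 * k) = 1 := by rw [pow_mul]; simp
    rw [e] at hdet
    simp only [C_mul, C_neg, C_pow] at hdet ⊢
    linear_combination hdet
  refine ⟨W, ?_, r1, r2, r3, h4⟩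
  intro h0
  rw [h0] at h4
  simp at h4

lemma ric_exists {k : ℕ} (hkp : 2 * k < p) {a : ZMod p} (ha : a ≠ 0) {s : ZMod p}
    (hs : s ≠ 0) : ∃ A v : ℕ → ZMod p, Ric k a A v ∧ A 1 = s := by
  let A' : ℕ → ZMod p := fun n => Nat.rec s (fun j x => a * (j + 1) * (j + 1 - 2 * k) * x⁻¹) n
  let A : ℕ → ZMod p := fun n => if n = 0 then 0 else A' (n - 1)
  have hA0 : A 0 = 0 := rfl
  have hA1 : A 1 = s := rfl
  have hAs : ∀ j, 1 ≤ j → A (j + 1) = a * j * (j - 2 * k) * (A j)⁻¹ := by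
    intro j hj
    obtain ⟨i, rfl⟩ : ∃ i, j = i + 1 := ⟨j - 1, by omega⟩
    have : A (i + 1 + 1) = a * (i + 1) * (i + 1 - 2 * k) * (A (i + 1))⁻¹ := rfl
    rw [this]; push_cast; rfl
  have hne : ∀ j, 1 ≤ j → j ≤ 2 * k → A j ≠ 0 := by
    intro j hj
    induction j, hj using Nat.le_induction with
    | base => intro _; rwa [hA1]
    | succ j hj ih =>
      intro hjk
      rw [hAs j hj]
      have h1 : (j : ZMod p) - 2 * k ≠ 0 := by
        have := natCast_ne (p := p) (n := 2 * k - j) (by omega) (by omega)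
        rw [Nat.cast_sub (by omega)] at this
        push_cast at this
        intro h; apply this; linear_combination -h
      exact mul_ne_zero (mul_ne_zero (mul_ne_zero ha (natCast_ne (by omega) (by omega))) h1)
        (inv_ne_zero (ih (by omega)))
  refine ⟨A, fun j => (2 * j - 1 - 2 * k) * (A j)⁻¹, ⟨hA0, hne, ?_, ?_⟩, hA1⟩
  · intro j hj
    rcases Nat.eq_zero_or_pos j with rfl | hj0
    · rw [hA0]; simp
    · rw [hAs j hj0, mul_assoc, inv_mul_cancel₀ (hne j hj0 hj), mul_one]
  · intro j h1 h2
    rw [mul_assoc, inv_mul_cancel₀ (hne j h1 h2), mul_one]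

end PQ

/-! ### The polynomials `A_{i,k}` and division by `P_k` -/

section BSeq

variable {p : ℕ} [Fact p.Prime]

/-- The sequence `T`, `[T^p / P]`, … attached to `P = (T² + a)^k`; for `a = -1` it is the
sequence `A_{i,k}`. -/
def Bq (p : ℕ) [Fact p.Prime] (k : ℕ) (a : ZMod p) : ℕ → (ZMod p)[X]
  | 0 => X
  | i + 1 => Bq p k a i ^ p / Pka k a

lemma Pka_neg_one (k : ℕ) : Pka k (-1 : ZMod p) = Pk k := by
  simp [Pka, Pk, sub_eq_add_neg]

lemma Qka_neg_one (k : ℕ) : Qka k (-1 : ZMod p) = Qk k := by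
  rw [Qka, Qk, Pka_neg_one]

lemma Bq_neg_one (k i : ℕ) : Bq p k (-1) i = Aseq (ZMod p) p k i := by
  induction i with
  | zero => rfl
  | succ i ih => rw [Bq, Aseq, ih, Pka_neg_one]

lemma C_of_dvd {a x : ZMod p} (h : X ^ 2 + C a ∣ C x) : x = 0 := by
  by_contra h0
  have h1 := natDegree_le_of_dvd h (C_ne_zero.mpr h0)
  rw [natDegree_X_pow_add_C, natDegree_C] at h1
  omega

/-- Dividing the `p`-th power of an odd polynomial by `P` leaves a constant multiple of `Q`: the
derivative of the remainder is a multiple of `(T² + a)^(k-1)` of degree at most `2k - 2`. -/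
lemma div_step {k : ℕ} {a : ZMod p} (hodd : Odd p) (hk : 1 ≤ k) (hkp : 2 * k < p)
    {B : (ZMod p)[X]} (hB : B.comp (-X) = -B) (hd : 1 ≤ B.natDegree) :
    (B ^ p / Pka k a).comp (-X) = -(B ^ p / Pka k a) ∧
    (B ^ p / Pka k a).natDegree + 2 * k = p * B.natDegree ∧
    ∃ c : ZMod p, B ^ p = (B ^ p / Pka k a) * Pka k a + C c * Qka k a ∧
      (X ^ 2 + C a) * derivative (B ^ p / Pka k a)
        + 2 * (k : (ZMod p)[X]) * X * (B ^ p / Pka k a) = -C c := by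
  have hP0 : Pka k a ≠ 0 := (Pka_monic k a).ne_zero
  set q := B ^ p / Pka k a with hq
  set r := B ^ p % Pka k a with hr
  have hdiv : Pka k a * q + r = B ^ p := EuclideanDomain.div_add_mod _ _
  have hrd : r.degree < (Pka k a).degree := degree_mod_lt _ hP0
  have hrn : r.natDegree < 2 * k := by
    rw [← Pka_natDegree k a]
    by_cases h0 : r = 0
    · rw [h0, natDegree_zero, Pka_natDegree]; omega
    · exact natDegree_lt_natDegree h0 hrd
  have hPe : (Pka k a).comp (-X) = Pka k a := by
    unfold Pka; simp
  have hcomp : Pka k a * q.comp (-X) + r.comp (-X) = -B ^ p := by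
    have := congrArg (fun f => f.comp (-X)) hdiv
    simp only [add_comp, mul_comp, pow_comp, hPe, hB] at this
    rw [this, hodd.neg_pow]
  have hrr : r.comp (-X) + r = 0 := by
    by_contra h0
    have h1 : Pka k a ∣ r.comp (-X) + r := ⟨-(q.comp (-X) + q), by linear_combination hcomp + hdiv⟩
    have h2 := natDegree_le_of_dvd h1 h0
    have h3 : (r.comp (-X) + r).natDegree ≤ r.natDegree := by
      refine (natDegree_add_le _ _).trans (max_le ?_ le_rfl)
      refine natDegree_comp_le.trans ?_
      rw [natDegree_neg, natDegree_X, mul_one]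
    rw [Pka_natDegree] at h2
    omega
  have hqq : q.comp (-X) = -q := by
    apply mul_left_cancel₀ hP0
    linear_combination hcomp + hdiv - hrr
  have h2 : (2 : ZMod p) ≠ 0 := by
    have := natCast_ne (p := p) (n := 2) (by omega) (by omega)
    exact_mod_cast this
  have hr0 : r.eval 0 = 0 := by
    have := congrArg (eval 0) hrr
    simp only [eval_add, eval_comp, eval_neg, eval_X, neg_zero, eval_zero] at this
    have h3 : 2 * r.eval 0 = 0 := by linear_combination this
    exact (mul_eq_zero.mp h3).resolve_left h2
  have hder : derivative r =
      Pka (k - 1) a * (-((X ^ 2 + C a) * derivative q + 2 * (k : (ZMod p)[X]) * X * q)) := by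
    have := congrArg derivative hdiv
    rw [derivative_add, derivative_mul, Pka_derivative, derivative_pow, Pka_succ k hk] at this
    simp only [CharP.cast_eq_zero, C_0, zero_mul] at this
    linear_combination this
  obtain ⟨c, hc⟩ : ∃ c : ZMod p,
      -((X ^ 2 + C a) * derivative q + 2 * (k : (ZMod p)[X]) * X * q) = C c := by
    set t := -((X ^ 2 + C a) * derivative q + 2 * (k : (ZMod p)[X]) * X * q)
    by_cases h0 : t = 0
    · exact ⟨0, by rw [h0, C_0]⟩
    have h3 : (derivative r).natDegree = 2 * (k - 1) + t.natDegree := by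
      rw [hder, (Pka_monic _ a).natDegree_mul' h0, Pka_natDegree]
    have h4 : (derivative r).natDegree ≤ r.natDegree - 1 := natDegree_derivative_le r
    exact ⟨t.coeff 0, eq_C_of_natDegree_eq_zero (by omega)⟩
  have hQd := Qka_natDegree k hk a
  have hrQ : r = C c * Qka k a := by
    apply eq_of_derivative
    · omega
    · exact (natDegree_C_mul_le _ _).trans_lt (by omega)
    · rw [hder, hc, derivative_C_mul, Qka_derivative k hk hkp]; ring
    · rw [hr0, eval_C_mul, Qka, polyInt_eval, mul_zero]
  have hfin : B ^ p = q * Pka k a + C c * Qka k a := by rw [← hrQ, ← hdiv]; ring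
  refine ⟨hqq, ?_, c, hfin, by rw [← hc]; ring⟩
  have hpd : p ≤ p * B.natDegree := Nat.le_mul_of_pos_right p hd
  have h5 : (q * Pka k a).natDegree = p * B.natDegree := by
    have : q * Pka k a = B ^ p - r := by rw [← hdiv]; ring
    rw [this, natDegree_sub_eq_left_of_natDegree_lt, natDegree_pow]
    rw [natDegree_pow]; omega
  have hq0 : q ≠ 0 := by
    rintro h0
    rw [h0, zero_mul, natDegree_zero] at h5
    omega
  rw [← h5, natDegree_mul hq0 hP0, Pka_natDegree]

lemma Bq_odd {k : ℕ} (a : ZMod p) (hodd : Odd p) (hk : 1 ≤ k) (hkp : 2 * k < p) (i : ℕ) :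
    (Bq p k a i).comp (-X) = -Bq p k a i ∧ 1 ≤ (Bq p k a i).natDegree := by
  induction i with
  | zero => simp [Bq]
  | succ i ih =>
    obtain ⟨h1, h2, -⟩ := div_step (a := a) hodd hk hkp ih.1 ih.2
    refine ⟨h1, ?_⟩
    have : p ≤ p * (Bq p k a i).natDegree := Nat.le_mul_of_pos_right p ih.2
    rw [Bq]; omega

lemma Bq_natDegree {k : ℕ} (a : ZMod p) (hodd : Odd p) (hk : 1 ≤ k) (hkp : 2 * k < p) (i : ℕ) :
    (Bq p k a (i + 1)).natDegree + 2 * k = p * (Bq p k a i).natDegree :=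
  have h := Bq_odd a hodd hk hkp i
  (div_step hodd hk hkp h.1 h.2).2.1

lemma Bq_rem {k : ℕ} (a : ZMod p) (hodd : Odd p) (hk : 1 ≤ k) (hkp : 2 * k < p) :
    ∃ c : ℕ → ZMod p, ∀ i,
      Bq p k a i ^ p = Bq p k a (i + 1) * Pka k a + C (c i) * Qka k a ∧
      (X ^ 2 + C a) * derivative (Bq p k a (i + 1))
        + 2 * (k : (ZMod p)[X]) * X * Bq p k a (i + 1) = -C (c i) := by
  have h := fun i => (div_step (a := a) hodd hk hkp (Bq_odd a hodd hk hkp i).1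
    (Bq_odd a hodd hk hkp i).2).2.2
  choose c hc using h
  exact ⟨c, hc⟩

lemma S_dvd_P {k : ℕ} (hk : 1 ≤ k) (a : ZMod p) : X ^ 2 + C a ∣ Pka k a :=
  dvd_pow_self _ (by omega)

/-- `T² + a` and `Q` are coprime. -/
lemma S_coprime_Q {k : ℕ} {a x : ZMod p} (hk : 1 ≤ k) (hkp : 2 * k < p) (ha : a ≠ 0)
    (h : X ^ 2 + C a ∣ C x * Qka k a) : x = 0 := by
  obtain ⟨A, v, hR, -⟩ := ric_exists hkp ha one_ne_zero
  obtain ⟨W, -, -, -, -, h4⟩ := hR.pq hk hkp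
  apply C_of_dvd (a := a)
  have : C x = Pka k a * (C x * C W * cnt v 1 0 (2 * k))
      + C x * Qka k a * (C (A 1 * A (2 * k) * W ^ 2) * Qka k a) := by
    linear_combination (-C x) * h4
  rw [this]
  exact dvd_add ((S_dvd_P hk a).mul_right _) (h.mul_right _)

lemma C_pow_p (x : ZMod p) : (C x : (ZMod p)[X]) ^ p = C x := by
  rw [← C_pow, ZMod.pow_card]

/-- The remainders `c_i Q` of the successive divisions form a geometric progression. -/
lemma Bq_rem_rec {k : ℕ} {a : ZMod p} (hk : 1 ≤ k) (hkp : 2 * k < p)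
    (ha : a ≠ 0) {c : ℕ → ZMod p}
    (hc : ∀ i, Bq p k a i ^ p = Bq p k a (i + 1) * Pka k a + C (c i) * Qka k a ∧
      (X ^ 2 + C a) * derivative (Bq p k a (i + 1))
        + 2 * (k : (ZMod p)[X]) * X * Bq p k a (i + 1) = -C (c i)) (i : ℕ) :
    2 * k * a * c (i + 1) = c i * c 0 := by
  have h0 := (hc 0).1
  rw [Bq] at h0
  obtain ⟨-, h1⟩ := hc i
  obtain ⟨h2, -⟩ := hc (i + 1)
  set B := Bq p k a (i + 1)
  have h3 : X ^ 2 + C a ∣ C (2 * k * a) * B - C (c i) * X := by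
    refine ⟨X * derivative B + 2 * (k : (ZMod p)[X]) * B, ?_⟩
    simp only [map_mul, map_natCast, map_ofNat]
    linear_combination (-X) * h1
  have h4 : X ^ 2 + C a ∣ C (2 * k * a) * B ^ p - C (c i) * X ^ p := by
    refine h3.trans ?_
    have : (C (2 * k * a) * B - C (c i) * X) ^ p = C (2 * k * a) * B ^ p - C (c i) * X ^ p := by
      rw [sub_pow_char, mul_pow, mul_pow, C_pow_p, C_pow_p]
    rw [← this]
    exact dvd_pow_self _ (Fact.out : p.Prime).ne_zero
  apply sub_eq_zero.mp
  apply S_coprime_Q hk hkp ha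
  have : C (2 * k * a * c (i + 1) - c i * c 0) * Qka k a =
      (C (2 * k * a) * B ^ p - C (c i) * X ^ p)
        - Pka k a * (C (2 * k * a) * Bq p k a (i + 1 + 1) - C (c i) * Bq p k a (0 + 1)) := by
    rw [h2, h0]; simp only [C_sub, C_mul]; ring
  rw [this]
  exact dvd_sub h4 ((S_dvd_P hk a).mul_right _)

/-- Applied to the determinant identity of `Ric.pq`, where `x = A₁ A_{2k} W²`: reducing modulo
`T² + a`, which divides `T^{2p} + a`, shows that `x` does not depend on the choice of `A₁`. -/
lemma kappa {k : ℕ} {a x w c₀ : ZMod p} (hk : 1 ≤ k) {b u : (ZMod p)[X]}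
    (h0 : X ^ p = b * Pka k a + C c₀ * Qka k a)
    (h1 : C w * Pka k a * u + C x * Qka k a ^ 2 = 1) : x * a = -c₀ ^ 2 := by
  apply sub_eq_zero.mp
  apply C_of_dvd (a := a)
  have h2 : X ^ 2 + C a ∣ (X ^ p) ^ 2 + C a := by
    have : (X ^ 2 + C a : (ZMod p)[X]) ^ p = (X ^ p) ^ 2 + C a := by
      rw [add_pow_char, C_pow_p]; ring
    rw [← this]
    exact dvd_pow_self _ (Fact.out : p.Prime).ne_zero
  have : C (x * a - -c₀ ^ 2) = ((X ^ p) ^ 2 + C a) * C x +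
      Pka k a * (C w * u * C c₀ ^ 2 - C x * b * (X ^ p + C c₀ * Qka k a)) := by
    simp only [C_sub, C_neg, C_mul, C_pow]
    linear_combination (-(C c₀ ^ 2)) * h1 - C x * (X ^ p + C c₀ * Qka k a) * h0
  rw [this]
  exact dvd_add (h2.mul_right _) ((S_dvd_P hk a).mul_right _)

end BSeq

/-! ### From one relation between complete quotients to the next -/

section Block

variable {p : ℕ} [Fact p.Prime]

/-- The relation `β_n^p = e P β_m + ε Q` between two complete quotients. -/
def FrobRel (k : ℕ) (a : ZMod p) (β : ℕ → LaurentSeries (ZMod p)) (n m : ℕ) (e ε : ZMod p) : Prop :=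
  β n ^ p = pEval (C e) * pEval (Pka k a) * β m + pEval (C ε) * pEval (Qka k a)

lemma frob (x y : LaurentSeries (ZMod p)) : (x + y) ^ p = x ^ p + y ^ p := by
  have : CharP (LaurentSeries (ZMod p)) p :=
    charP_of_injective_ringHom (HahnSeries.C : ZMod p →+* LaurentSeries (ZMod p)).injective p
  exact add_pow_char x y p

/-- The relation at `(n, m)` after removing the partial quotient `a_n`. -/
lemma rel_tail {k : ℕ} {s e ε c : ZMod p} {α : LaurentSeries (ZMod p)} {a : ℕ → (ZMod p)[X]}
    {β : ℕ → LaurentSeries (ZMod p)} (hcf : IsCFOf α a β) {n m : ℕ} (hn : 1 ≤ n)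
    (hrel : FrobRel k s β n m e ε) {b : (ZMod p)[X]}
    (hb : a n ^ p = b * Pka k s + C c * Qka k s) :
    (β (n + 1) ^ p)⁻¹ = pEval (C e) * pEval (Pka k s) * β m
      + pEval (C (ε - c)) * pEval (Qka k s) - pEval b * pEval (Pka k s) := by
  obtain ⟨-, -, h3⟩ := hcf.2 n hn
  have h4 := congrArg (pEvalHom (ZMod p)) hb
  simp only [map_add, map_mul, map_pow] at h4
  have h5 : β n ^ p = pEval (a n) ^ p + (β (n + 1) ^ p)⁻¹ := by
    conv_lhs => rw [h3]
    rw [frob, inv_pow]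
  simp only [FrobRel, pEval_hom, map_sub] at *
  linear_combination hrel - h5 - h4

lemma adeg_next {k : ℕ} (hk : 1 ≤ k) (hkp : 2 * k < p) {s e : ZMod p} (he : e ≠ 0) (w : ZMod p)
    {u : LaurentSeries (ZMod p)} (hu : 1 ≤ adeg u) {x : ZMod p} (hx : x ≠ 0) :
    0 < adeg ((pEval (C e) * u ^ p - pEval (C w) * pEval (Qka k s))
      / (pEval (C x) * pEval (Pka k s))) := by
  have hu0 : u ≠ 0 := ne_zero_of_adeg (by omega)
  have hP0 : pEval (Pka k s) ≠ 0 := pEval_ne (Pka_monic k s).ne_zero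
  have he0 : pEval (C e) ≠ 0 := pEval_ne (C_ne_zero.mpr he)
  have hx0 : pEval (C x) ≠ 0 := pEval_ne (C_ne_zero.mpr hx)
  have h1 : pEval (C e) * u ^ p ≠ 0 := mul_ne_zero he0 (pow_ne_zero _ hu0)
  have h2 : adeg (pEval (C e) * u ^ p) = p * adeg u := by
    rw [adeg_mul he0 (pow_ne_zero _ hu0), adeg_pow, pEval_C, adeg_C he, zero_add]
  have hp1 : (p : ℤ) ≤ p * adeg u := le_mul_of_one_le_right (by omega) hu
  have h3 : DLt (pEval (C (-w) * Qka k s)) p := by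
    apply pEval_dlt
    have := Qka_natDegree k hk s
    exact (natDegree_C_mul_le _ _).trans_lt (by omega)
  have h4 : pEval (C e) * u ^ p - pEval (C w) * pEval (Qka k s)
      = pEval (C e) * u ^ p + pEval (C (-w) * Qka k s) := by
    simp only [pEval_hom, map_mul, map_neg]; ring
  have h5 : adeg (pEval (C e) * u ^ p - pEval (C w) * pEval (Qka k s)) = p * adeg u := by
    rw [h4, adeg_add h1 (fun n hn => h3 n (by omega)), h2]
  have h6 := ne_zero_of_adeg (show 0 < adeg (pEval (C e) * u ^ p
    - pEval (C w) * pEval (Qka k s)) by omega)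
  rw [div_eq_mul_inv, adeg_mul h6 (inv_ne_zero (mul_ne_zero hx0 hP0)), adeg_inv,
    adeg_mul hx0 hP0, pEval_C x, adeg_C hx, adeg_pEval (Pka_monic k s).ne_zero, Pka_natDegree, h5]
  push_cast
  omega

/-- If `ε - c ≠ 0`, the relation at `(n, m)` determines the `2k + 1` partial quotients from
`a_m` on, and propagates to `(n + 1, m + 2k + 1)`. -/
lemma block {k : ℕ} (hk : 1 ≤ k) (hkp : 2 * k < p) {s e ε c : ZMod p} (hs : s ≠ 0) (he : e ≠ 0)
    {α : LaurentSeries (ZMod p)} {a : ℕ → (ZMod p)[X]}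
    {β : ℕ → LaurentSeries (ZMod p)} (hcf : IsCFOf α a β) {n m : ℕ} (hn : 1 ≤ n) (hm : 1 ≤ m)
    (hrel : FrobRel k s β n m e ε) {b : (ZMod p)[X]}
    (hb : a n ^ p = b * Pka k s + C c * Qka k s) (hδ : ε - c ≠ 0) :
    ∃ (A v : ℕ → ZMod p) (W : ZMod p) (u : (ZMod p)[X]), Ric k s A v ∧ A 1 * e = ε - c ∧ W ≠ 0 ∧
      a m = C e⁻¹ * b ∧ (∀ j, 1 ≤ j → j ≤ 2 * k → a (m + j) = C (v j) * X) ∧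
      FrobRel k s β (n + 1) (m + 2 * k + 1) (W ^ 2 * e⁻¹) (W ^ 2 * e⁻¹ * A (2 * k)) ∧
      C W * Pka k s * u + C (A 1 * A (2 * k) * W ^ 2) * Qka k s ^ 2 = 1 := by
  obtain ⟨A, v, hR, hA1⟩ := ric_exists hkp hs (div_ne_zero hδ he)
  obtain ⟨W, hW, q1, q2, q3, q4⟩ := hR.pq hk hkp
  have hA1' : A 1 * e = ε - c := by rw [hA1]; field_simp
  have ht := rel_tail hcf hn hrel hb
  have hd := cf_adeg hcf (show 1 ≤ n + 1 by omega)
  have hu1 : 1 ≤ adeg (β (n + 1)) := by omega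
  have hu0 : β (n + 1) ≠ 0 := ne_zero_of_adeg (by omega)
  have hh := adeg_next hk hkp (s := s) he (W ^ 2 * A (2 * k)) hu1 (pow_ne_zero 2 hW)
  set h := (pEval (C e) * β (n + 1) ^ p - pEval (C (W ^ 2 * A (2 * k))) * pEval (Qka k s))
      / (pEval (C (W ^ 2)) * pEval (Pka k s)) with hh'
  have hv : ∀ j, 1 ≤ j → j ≤ 2 * k → v j ≠ 0 := fun j h1 h2 => hR.v_ne hkp h1 h2
  have hP0 : pEval (Pka k s) ≠ 0 := pEval_ne (Pka_monic k s).ne_zero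
  have he0 : pEval (C e) ≠ 0 := pEval_ne (C_ne_zero.mpr he)
  have hW0 : pEval (C W) ≠ 0 := pEval_ne (C_ne_zero.mpr hW)
  have hei : pEval (C e⁻¹) = (pEval (C e))⁻¹ := by rw [pEval_C, pEval_C, map_inv₀]
  have hA1e := congrArg pEval (congrArg C hA1')
  have hhe : pEval (C W) ^ 2 * pEval (Pka k s) * h = pEval (C e) * β (n + 1) ^ p
      - pEval (C W) ^ 2 * pEval (C (A (2 * k))) * pEval (Qka k s) := by
    have hW2 : pEval (C (W ^ 2)) = pEval (C W) ^ 2 := by simp only [pEval_hom, map_pow]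
    rw [hh', hW2]
    have : pEval (C (W ^ 2 * A (2 * k))) = pEval (C W) ^ 2 * pEval (C (A (2 * k))) := by
      simp only [pEval_hom, map_mul, map_pow]
    rw [this]; field_simp
  have hg : β m = pEval (C e⁻¹ * b) + (cfE v (2 * k) h)⁻¹ := by
    rw [cfE_eq v (2 * k) h hv hh, inv_div, q1, q2, q3]
    have hq4 := congrArg pEval q4
    simp only [pEval_hom, map_mul, map_add, map_neg, map_pow, map_sub, map_one] at *
    rw [hei]
    generalize pEvalHom (ZMod p) (Pka k s) = P at *
    generalize pEvalHom (ZMod p) (Qka k s) = Q at *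
    generalize pEvalHom (ZMod p) (C W) = w at *
    generalize pEvalHom (ZMod p) (C e) = E at *
    generalize pEvalHom (ZMod p) (cnt v 1 0 (2 * k)) = N at *
    generalize pEvalHom (ZMod p) (C (A (2 * k))) = Al at *
    generalize pEvalHom (ZMod p) (C (A 1)) = A1 at *
    generalize pEvalHom (ZMod p) b = b' at *
    generalize hu : β (n + 1) ^ p = u at *
    have hu0' : u ≠ 0 := by rw [← hu]; exact pow_ne_zero _ hu0
    have hnum : w * P * h + Al * w * Q = E * u / w := by
      field_simp; linear_combination hhe
    have ht' : E * P * β m * u = 1 - (A1 * E) * Q * u + b' * P * u := by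
      rw [hA1e]
      have := congrArg (fun z => z * u) ht
      simp only [inv_mul_cancel₀ hu0'] at this
      linear_combination -this
    have hden : (-A1 * w * Q * h + N) * (w * P) = 1 - A1 * Q * (E * u) := by
      linear_combination (-A1 * Q) * hhe + hq4
    rw [hnum]
    have hden' : -A1 * w * Q * h + N = (1 - A1 * Q * (E * u)) / (w * P) := by
      rw [eq_div_iff (mul_ne_zero hW0 hP0), hden]
    rw [hden']
    field_simp
    linear_combination ht'
  obtain ⟨r1, r2⟩ := cf_unique hcf hm (adeg_cfE v _ _ hv hh) hg
  obtain ⟨r3, r4⟩ := cf_chain hcf (show 1 ≤ m + 1 by omega) v (2 * k) h hv hh r2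
  refine ⟨A, v, W, _, hR, hA1', hW, r1, fun j h1 h2 => ?_, ?_, q4⟩
  · rw [← r3 j h1 h2]; congr 1; omega
  · rw [show m + 2 * k + 1 = m + 1 + 2 * k by ring, FrobRel, r4]
    simp only [pEval_hom, map_mul, map_pow] at *
    rw [hei]
    field_simp
    linear_combination -hhe

/-- In the degenerate case `ε = c` the partial quotient `a_{m+1}` absorbs the factor `P`. -/
lemma degenerate {k : ℕ} {s e ε c : ZMod p} (he : e ≠ 0)
    {α : LaurentSeries (ZMod p)} {a : ℕ → (ZMod p)[X]}
    {β : ℕ → LaurentSeries (ZMod p)} (hcf : IsCFOf α a β) {n m : ℕ} (hn : 1 ≤ n) (hm : 1 ≤ m)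
    (hrel : FrobRel k s β n m e ε) {b : (ZMod p)[X]}
    (hb : a n ^ p = b * Pka k s + C c * Qka k s) (hδ : ε - c = 0) :
    (a (m + 1)).natDegree = 2 * k + p * (a (n + 1)).natDegree := by
  have ht := rel_tail hcf hn hrel hb
  have hd := cf_adeg hcf (show 1 ≤ n + 1 by omega)
  have hu0 : β (n + 1) ≠ 0 := ne_zero_of_adeg (by omega)
  have hP0 : pEval (Pka k s) ≠ 0 := pEval_ne (Pka_monic k s).ne_zero
  have he0 : pEval (C e) ≠ 0 := pEval_ne (C_ne_zero.mpr he)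
  have hei : pEval (C e⁻¹) = (pEval (C e))⁻¹ := by rw [pEval_C, pEval_C, map_inv₀]
  have hdeg : adeg (pEval (C e) * pEval (Pka k s) * β (n + 1) ^ p)
      = 2 * k + p * (a (n + 1)).natDegree := by
    rw [adeg_mul (mul_ne_zero he0 hP0) (pow_ne_zero _ hu0), adeg_mul he0 hP0, adeg_pow, pEval_C,
      adeg_C he, adeg_pEval (Pka_monic k s).ne_zero, Pka_natDegree, hd.2]
    push_cast; ring
  have hpos : 0 < p * (a (n + 1)).natDegree := Nat.mul_pos (Fact.out : p.Prime).pos hd.1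
  have hg : β m = pEval (C e⁻¹ * b) + (pEval (C e) * pEval (Pka k s) * β (n + 1) ^ p)⁻¹ := by
    rw [hδ] at ht
    simp only [pEval_hom, map_mul, map_zero, zero_mul, add_zero] at *
    rw [hei, mul_inv, ht]
    field_simp
    ring
  obtain ⟨-, r2⟩ := cf_unique hcf hm (by rw [hdeg]; exact_mod_cast (by omega)) hg
  have h1 := (cf_adeg hcf (show 1 ≤ m + 1 by omega)).2
  rw [r2, hdeg] at h1
  exact_mod_cast h1.symm

end Block

/-! ### The upper limit of the degree ratios -/

section Limsup

/-- If the degrees reproduce themselves by blocks `p d_n - 2k, 1, …, 1`, one for each `n`, after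
an initial segment `E, …, E` of length `l`, then the upper limit of `d_{N+1} / (d_1 + ⋯ + d_N)` is
`L = ((p - 1) E - 2k) / (l E)`. Indeed `d_{N+1} ≤ L (d_1 + ⋯ + d_N) + E`, with equality for
infinitely many `N`. -/
lemma limsup_blocks {p k l : ℕ} (hl : 1 ≤ l) {d : ℕ → ℝ} {E L : ℝ}
    (hE : 1 ≤ E) (hd : ∀ n, 1 ≤ n → 1 ≤ d n) (h0 : ∀ j, 1 ≤ j → j ≤ l → d j = E)
    (h1 : ∀ N, d (l + 1 + (2 * k + 1) * N) = p * d (N + 1) - 2 * k)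
    (h2 : ∀ N j, 1 ≤ j → j ≤ 2 * k → d (l + 1 + (2 * k + 1) * N + j) = 1)
    (hL : L * (l * E) = (p - 1) * E - 2 * k) (hL0 : 0 ≤ L) :
    Filter.limsup (fun n => d (n + 1) / ∑ j ∈ Finset.Icc 1 n, d j) Filter.atTop = L := by
  set D : ℕ → ℝ := fun n => ∑ j ∈ Finset.Icc 1 n, d j with hD
  have D0 : D 0 = 0 := by simp [hD]
  have Ds : ∀ n, D (n + 1) = D n + d (n + 1) := fun n => by
    simp only [hD]; rw [Finset.sum_Icc_succ_top (by omega)]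
  have Dn : ∀ n : ℕ, (n : ℝ) ≤ D n := by
    intro n
    induction n with
    | zero => simp [D0]
    | succ n ih => rw [Ds]; push_cast; linarith [hd (n + 1) (by omega)]
  have Dl : ∀ j, j ≤ l → D j = j * E := by
    intro j
    induction j with
    | zero => intro _; simp [D0]
    | succ j ih => intro hj; rw [Ds, ih (by omega), h0 (j + 1) (by omega) hj]; push_cast; ring
  have Db : ∀ N, D (l + (2 * k + 1) * N) = l * E + p * D N := by
    intro N
    induction N with
    | zero => rw [mul_zero, add_zero, Dl l le_rfl, D0]; ring
    | succ N ih =>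
      have h3 : ∀ j, j ≤ 2 * k → D (l + 1 + (2 * k + 1) * N + j)
          = D (l + (2 * k + 1) * N) + (p * d (N + 1) - 2 * k) + j := by
        intro j
        induction j with
        | zero =>
          intro _
          rw [add_zero, ← h1, show l + 1 + (2 * k + 1) * N = l + (2 * k + 1) * N + 1 by ring, Ds]
          simp
        | succ j ihj =>
          intro hj
          rw [← add_assoc, Ds, ihj (by omega), add_assoc (l + 1 + (2 * k + 1) * N) j 1,
            h2 N (j + 1) (by omega) hj]
          push_cast; ring
      have h4 := h3 (2 * k) le_rfl
      rw [show l + (2 * k + 1) * (N + 1) = l + 1 + (2 * k + 1) * N + 2 * k by ring, h4, ih, Ds]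
      push_cast; ring
  have Dpos : ∀ n, 0 ≤ D n := fun n => le_trans (Nat.cast_nonneg n) (Dn n)
  have up : ∀ N, d (N + 1) ≤ L * D N + E := by
    intro N
    induction N using Nat.strong_induction_on with
    | _ N ih =>
      have hLD := mul_nonneg hL0 (Dpos N)
      rcases Nat.lt_or_ge N l with hN | hN
      · rw [h0 (N + 1) (by omega) (by omega)]; linarith
      set n := (N - l) / (2 * k + 1) with hn
      set j := (N - l) % (2 * k + 1) with hj
      have hnj : N = l + (2 * k + 1) * n + j := by
        have : (2 * k + 1) * n + j = N - l := Nat.div_add_mod _ _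
        omega
      have hjk : j < 2 * k + 1 := Nat.mod_lt _ (by omega)
      rcases Nat.eq_zero_or_pos j with hj0 | hj0
      · rw [hj0, add_zero] at hnj
        have hnN : n < N := by nlinarith
        have h3 := ih n hnN
        rw [hnj, show l + (2 * k + 1) * n + 1 = l + 1 + (2 * k + 1) * n by ring, h1, Db]
        have h4 : (p : ℝ) * d (n + 1) ≤ p * (L * D n + E) :=
          mul_le_mul_of_nonneg_left h3 (Nat.cast_nonneg p)
        linarith
      · rw [show N + 1 = l + 1 + (2 * k + 1) * n + j by omega, h2 n j hj0 (by omega)]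
        linarith
  have eqn : ∀ M : ℕ, ∃ N ≥ M, d (N + 1) = L * D N + E := by
    intro M
    induction M with
    | zero => exact ⟨0, le_rfl, by rw [D0, h0 1 le_rfl hl]; ring⟩
    | succ M ih =>
      obtain ⟨N, hN, h3⟩ := ih
      refine ⟨l + (2 * k + 1) * N, by nlinarith, ?_⟩
      rw [show l + (2 * k + 1) * N + 1 = l + 1 + (2 * k + 1) * N by ring, h1, Db, h3]
      linarith
  have hDt : Filter.Tendsto D Filter.atTop Filter.atTop :=
    Filter.tendsto_atTop_mono Dn tendsto_natCast_atTop_atTop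
  have hlim : Filter.Tendsto (fun N => L + E / D N) Filter.atTop (nhds L) := by
    simpa using (hDt.const_div_atTop E).const_add L
  have hpos : ∀ N, 1 ≤ N → 0 < D N := fun N hN =>
    lt_of_lt_of_le (by exact_mod_cast hN) (Dn N)
  have hle : ∀ᶠ N in Filter.atTop, d (N + 1) / D N ≤ L + E / D N := by
    filter_upwards [Filter.eventually_ge_atTop 1] with N hN
    have := hpos N hN
    rw [div_le_iff₀ this, add_mul, div_mul_cancel₀ _ this.ne']
    exact up N
  have hbdd : Filter.IsBoundedUnder (· ≤ ·) Filter.atTop (fun N => d (N + 1) / D N) :=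
    hlim.isBoundedUnder_le.mono_le hle
  have hfreq : ∃ᶠ N in Filter.atTop, L ≤ d (N + 1) / D N := by
    rw [Filter.frequently_atTop]
    intro M
    obtain ⟨N, hN, h3⟩ := eqn (M + 1)
    refine ⟨N, by omega, ?_⟩
    rw [le_div_iff₀ (hpos N (by omega)), h3]
    linarith
  apply le_antisymm
  · rw [← hlim.limsup_eq]
    refine Filter.limsup_le_limsup hle ?_ hlim.isBoundedUnder_le
    refine Filter.isCoboundedUnder_le_of_le Filter.atTop (x := 0) (fun N => ?_)
    exact div_nonneg (by linarith [hd (N + 1) (by omega)]) (Dpos N)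
  · exact Filter.le_limsup_of_frequently_le hfreq hbdd

end Limsup

/-! ### Perfect continued fractions -/

section Perfect

variable {p : ℕ} [Fact p.Prime]

lemma mul_Bq_pow {k : ℕ} {s lam x : ZMod p} {i : ℕ}
    (h : Bq p k s i ^ p = Bq p k s (i + 1) * Pka k s + C x * Qka k s) :
    (C lam * Bq p k s i) ^ p =
      (C lam * Bq p k s (i + 1)) * Pka k s + C (lam * x) * Qka k s := by
  rw [mul_pow, C_pow_p, h, C_mul]; ring

/-- The degrees in the block produced by `a_{N+1}` are `p deg a_{N+1} - 2k, 1, …, 1`, the block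
starting at the index `l + 1 + (2k + 1) N`. -/
def DegBlock (k l : ℕ) (a : ℕ → (ZMod p)[X]) (N : ℕ) : Prop :=
  (a (l + 1 + (2 * k + 1) * N)).natDegree + 2 * k = p * (a (N + 1)).natDegree ∧
  ∀ j, 1 ≤ j → j ≤ 2 * k → (a (l + 1 + (2 * k + 1) * N + j)).natDegree = 1

lemma nu0_eq {k l : ℕ} (hl : 1 ≤ l) {α : LaurentSeries (ZMod p)} {a : ℕ → (ZMod p)[X]}
    {β : ℕ → LaurentSeries (ZMod p)} (hcf : IsCFOf α a β) (hb : ∀ N, DegBlock k l a N)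
    {E : ℕ} (hE : 1 ≤ E) (h0 : ∀ j, 1 ≤ j → j ≤ l → (a j).natDegree = E) {L : ℝ}
    (hL : L * (l * E) = (p - 1) * E - 2 * k) (hL0 : 0 ≤ L) : nu0 a = L := by
  unfold nu0
  refine limsup_blocks (p := p) (k := k) (l := l) (E := E) (d := fun n => ((a n).natDegree : ℝ))
    hl (by exact_mod_cast hE)
    (fun n hn => by exact_mod_cast (cf_adeg hcf hn).1)
    (fun j h1 h2 => by rw [h0 j h1 h2]) (fun N => ?_) (fun N j h1 h2 => ?_) hL hL0
  · have := (hb N).1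
    simp only [eq_sub_iff_add_eq]
    exact_mod_cast this
  · simp only [(hb N).2 j h1 h2, Nat.cast_one]

/-- For a perfect expansion the degenerate case is excluded by degrees: `2k + p d` is neither `1`
nor of the form `p d' - 2k`, because `p` does not divide `4k`. -/
lemma perfect_blocks (hodd : Odd p) {l k : ℕ} (hl : 1 ≤ l) (hk : 1 ≤ k) (hkp : 2 * k < p)
    {α : LaurentSeries (ZMod p)} {a : ℕ → (ZMod p)[X]} {β : ℕ → LaurentSeries (ZMod p)}
    (h : PerfectType p l k α a β) (N : ℕ) : DegBlock k l a N := by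
  obtain ⟨hcf, ⟨e₁, ε₁, he₁, -, hrel⟩, hperf⟩ := h
  obtain ⟨c, hc⟩ := Bq_rem (-1 : ZMod p) hodd hk hkp
  have hperf' : ∀ n, 1 ≤ n → ∃ (lam : ZMod p) (i : ℕ), lam ≠ 0 ∧ a n = C lam * Bq p k (-1) i := by
    intro n hn
    obtain ⟨lam, i, h1, h2⟩ := hperf n hn
    exact ⟨lam, i, h1, by rw [h2, Bq_neg_one]⟩
  have key : ∀ N e ε, e ≠ 0 → FrobRel k (-1) β (N + 1) (l + 1 + (2 * k + 1) * N) e ε →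
      DegBlock k l a N ∧
      ∃ e' ε', e' ≠ 0 ∧ FrobRel k (-1) β (N + 1 + 1) (l + 1 + (2 * k + 1) * (N + 1)) e' ε' := by
    intro N e ε he hN
    obtain ⟨lam, i, hlam, hi⟩ := hperf' (N + 1) (by omega)
    have hb := mul_Bq_pow (lam := lam) (hc i).1
    rw [← hi] at hb
    have hδ : ε - lam * c i ≠ 0 := by
      intro h0
      have hdeg := degenerate he hcf (by omega) (by omega) hN hb h0
      obtain ⟨mu, j, hmu, hj⟩ := hperf' (l + 1 + (2 * k + 1) * N + 1) (by omega)
      have hpos := (cf_adeg hcf (show 1 ≤ N + 1 + 1 by omega)).1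
      rw [hj, natDegree_C_mul hmu] at hdeg
      rcases j with _ | j
      · rw [Bq, natDegree_X] at hdeg
        omega
      · have h1 := Bq_natDegree (-1 : ZMod p) hodd hk hkp j
        rw [hdeg] at h1
        have h2 : p ∣ 4 * k := by
          rw [← Nat.dvd_add_left (dvd_mul_right p (a (N + 1 + 1)).natDegree)]
          exact ⟨_, by rw [← h1]; ring⟩
        have hp := (Fact.out : p.Prime)
        rcases (Nat.Prime.dvd_mul hp).mp h2 with h3 | h3
        · have : p ∣ 2 := hp.dvd_of_dvd_pow (show p ∣ 2 ^ 2 from h3)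
          have := Nat.le_of_dvd (by omega) this
          omega
        · have := Nat.le_of_dvd (by omega) h3
          omega
    obtain ⟨A, v, W, u, hR, -, hW, r1, r2, r3, -⟩ :=
      block hk hkp (neg_ne_zero.mpr one_ne_zero) he hcf (by omega) (by omega) hN hb hδ
    refine ⟨⟨?_, fun j h1 h2 => ?_⟩, W ^ 2 * e⁻¹, W ^ 2 * e⁻¹ * A (2 * k),
      mul_ne_zero (pow_ne_zero _ hW) (inv_ne_zero he), ?_⟩
    · rw [r1, hi, natDegree_C_mul (inv_ne_zero he), natDegree_C_mul hlam, natDegree_C_mul hlam,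
        Bq_natDegree _ hodd hk hkp]
    · rw [r2 j h1 h2, natDegree_C_mul_X _ (hR.v_ne hkp h1 h2)]
    · convert r3 using 1; ring
  have all : ∀ N, ∃ e ε, e ≠ 0 ∧ FrobRel k (-1) β (N + 1) (l + 1 + (2 * k + 1) * N) e ε := by
    intro N
    induction N with
    | zero =>
      refine ⟨e₁, ε₁, he₁, ?_⟩
      rw [FrobRel, hcf.1, hrel, Pka_neg_one, Qka_neg_one, pEval_C, pEval_C]
      simp
    | succ N ih =>
      obtain ⟨e, ε, he, h1⟩ := ih
      exact (key N e ε he h1).2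
  obtain ⟨e, ε, he, h1⟩ := all N
  exact (key N e ε he h1).1

lemma part_one (hodd : Odd p) {l k : ℕ} (hl : 1 ≤ l) (hk : 1 ≤ k) (hkp : 2 * k < p)
    {α : LaurentSeries (ZMod p)} {a : ℕ → (ZMod p)[X]} {β : ℕ → LaurentSeries (ZMod p)}
    (h : PerfectType p l k α a β)
    (h0 : ∀ j, 1 ≤ j → j ≤ l → ∃ lam : ZMod p, lam ≠ 0 ∧ a j = C lam * Aseq (ZMod p) p k 0) :
    nu0 a = ((p : ℝ) - 2 * k - 1) / l := by
  have hl' : (l : ℝ) ≠ 0 := by exact_mod_cast (by omega)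
  refine nu0_eq hl h.1 (perfect_blocks hodd hl hk hkp h) (E := 1) le_rfl (fun j h1 h2 => ?_) ?_ ?_
  · obtain ⟨lam, h3, h4⟩ := h0 j h1 h2
    rw [h4, Aseq, natDegree_C_mul_X _ h3]
  · field_simp; push_cast; ring
  · apply div_nonneg _ (Nat.cast_nonneg l)
    have : (2 * k + 1 : ℝ) ≤ p := by exact_mod_cast hkp
    linarith

lemma part_two (hodd : Odd p) (i : ℕ)
    {α : LaurentSeries (ZMod p)} {a : ℕ → (ZMod p)[X]} {β : ℕ → LaurentSeries (ZMod p)}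
    (h : PerfectType p 1 1 α a β)
    (h0 : ∃ lam : ZMod p, lam ≠ 0 ∧ a 1 = C lam * Aseq (ZMod p) p 1 i) :
    nu0 a = ((p : ℝ) - 1) * ((p : ℝ) ^ (i + 1) - 3 * (p : ℝ) ^ i)
              / ((p : ℝ) ^ (i + 1) - 3 * (p : ℝ) ^ i + 2) := by
  have hp3 : 2 * 1 < p := by
    have := (Fact.out : p.Prime).two_le
    obtain ⟨m, hm⟩ := hodd
    omega
  have hp3' : (3 : ℝ) ≤ p := by exact_mod_cast hp3
  obtain ⟨lam, hlam, h1⟩ := h0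
  have hdeg : ∀ i, ((p : ℝ) - 1) * (Bq p 1 (-1) i).natDegree
      = (p : ℝ) ^ (i + 1) - 3 * (p : ℝ) ^ i + 2 := by
    intro i
    induction i with
    | zero => simp [Bq]; ring
    | succ i ih =>
      have h2 : (((Bq p 1 (-1) (i + 1)).natDegree : ℕ) : ℝ) + 2 * 1
          = p * (Bq p 1 (-1) i).natDegree := by
        exact_mod_cast Bq_natDegree (-1 : ZMod p) hodd le_rfl hp3 i
      rw [pow_succ (p : ℝ) (i + 1)]
      linear_combination (p - 1 : ℝ) * h2 + (p : ℝ) * ih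
  have hpi : 0 ≤ (p : ℝ) ^ (i + 1) - 3 * (p : ℝ) ^ i := by
    have : 0 ≤ (p : ℝ) ^ i * (p - 3) := mul_nonneg (by positivity) (by linarith)
    rw [pow_succ]; linarith
  refine nu0_eq le_rfl h.1 (perfect_blocks hodd le_rfl le_rfl hp3 h)
    (E := (Bq p 1 (-1) i).natDegree) (Bq_odd _ hodd le_rfl hp3 i).2 (fun j h3 h4 => ?_) ?_ ?_
  · obtain rfl : j = 1 := by omega
    rw [h1, ← Bq_neg_one, natDegree_C_mul hlam]
  · rw [hdeg i, Nat.cast_one, one_mul, ← mul_div_right_comm, div_eq_iff (by linarith)]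
    linear_combination ((p : ℝ) ^ (i + 1) - 3 * (p : ℝ) ^ i) * hdeg i
  · exact div_nonneg (mul_nonneg (by linarith) hpi) (by linarith)

end Perfect

/-! ### A criterion for perfectness -/

section Engine

variable {p : ℕ} [Fact p.Prime]

lemma Qka_ne {k : ℕ} (hk : 1 ≤ k) (hkp : 2 * k < p) (s : ZMod p) : Qka k s ≠ 0 := by
  intro h
  have h1 := Qka_derivative k hk hkp s
  rw [h, derivative_zero] at h1
  exact (Pka_monic (k - 1) s).ne_zero h1.symm

/-- The constants in a relation `β_n^p = e P β_m + ε Q` are unique. -/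
lemma FrobRel.unique {k : ℕ} (hk : 1 ≤ k) (hkp : 2 * k < p) {s e ε e' ε' : ZMod p}
    {α : LaurentSeries (ZMod p)} {a : ℕ → (ZMod p)[X]} {β : ℕ → LaurentSeries (ZMod p)}
    (hcf : IsCFOf α a β) {n m : ℕ} (hm : 1 ≤ m) (h : FrobRel k s β n m e ε)
    (h' : FrobRel k s β n m e' ε') : e = e' ∧ ε = ε' := by
  have h0 : pEval (C (e - e')) * pEval (Pka k s) * β m
      + pEval (C (ε - ε') * Qka k s) = 0 := by
    simp only [FrobRel, pEval_hom, map_sub, map_mul] at *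
    linear_combination h' - h
  have hP0 : pEval (Pka k s) ≠ 0 := pEval_ne (Pka_monic k s).ne_zero
  have hQ := Qka_natDegree k hk s
  have he : e = e' := by
    by_contra hne
    have hne' := sub_ne_zero.mpr hne
    have he0 : pEval (C (e - e')) ≠ 0 := pEval_ne (C_ne_zero.mpr hne')
    have hd := cf_adeg hcf hm
    have hβ : β m ≠ 0 := ne_zero_of_adeg (by omega)
    have h1 : adeg (pEval (C (e - e')) * pEval (Pka k s) * β m) = 2 * k + (a m).natDegree := by
      rw [adeg_mul (mul_ne_zero he0 hP0) hβ, adeg_mul he0 hP0, pEval_C, adeg_C hne',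
        adeg_pEval (Pka_monic k s).ne_zero, Pka_natDegree, hd.2]
      push_cast; ring
    have h2 := adeg_add (mul_ne_zero (mul_ne_zero he0 hP0) hβ)
      (y := pEval (C (ε - ε') * Qka k s)) (by
        rw [h1]
        intro n hn
        exact pEval_dlt (C (ε - ε') * Qka k s) (2 * k)
          ((natDegree_C_mul_le _ _).trans_lt (by omega)) n (by push_cast; omega))
    rw [h0, h1] at h2
    simp [adeg] at h2
    omega
  refine ⟨he, ?_⟩
  by_contra hne
  have h1 : pEval (C (ε - ε') * Qka k s) = 0 := by
    rw [he, sub_self] at h0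
    simpa [pEval_hom] using h0
  exact pEval_ne (mul_ne_zero (C_ne_zero.mpr (sub_ne_zero.mpr hne)) (Qka_ne hk hkp s)) h1

lemma c_zero_eq {k : ℕ} (hk : 1 ≤ k) (hkp : 2 * k < p) {s x y : ZMod p} {b b' : (ZMod p)[X]}
    (h : X ^ p = b * Pka k s + C x * Qka k s) (h' : X ^ p = b' * Pka k s + C y * Qka k s) :
    x = y := by
  by_contra hne
  have hne' := sub_ne_zero.mpr hne
  have hd : Pka k s ∣ C (x - y) * Qka k s := ⟨b' - b, by rw [C_sub]; linear_combination h' - h⟩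
  have h1 := natDegree_le_of_dvd hd (mul_ne_zero (C_ne_zero.mpr hne') (Qka_ne hk hkp s))
  rw [Pka_natDegree, natDegree_C_mul hne'] at h1
  have := Qka_natDegree k hk s
  omega

/-- The index of the first partial quotient of the block produced by `a_n`. -/
def fI (l k n : ℕ) : ℕ := l + 1 + (2 * k + 1) * (n - 1)

lemma fI_succ {l k n : ℕ} (hn : 1 ≤ n) : fI l k (n + 1) = fI l k n + 2 * k + 1 := by
  obtain ⟨m, rfl⟩ : ∃ m, n = m + 1 := ⟨n - 1, by omega⟩
  simp only [fI, Nat.add_sub_cancel]; ring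

lemma one_le_fI (l k n : ℕ) : 1 ≤ fI l k n := by unfold fI; omega

/-- Standing assumptions on the data `(p, l, k)` and `P = (T² + s)^k`, under which the
remainder in the division of `T^p` by `P` is `2Q`. -/
structure Setup (p : ℕ) [Fact p.Prime] (l k : ℕ) (s : ZMod p) (c : ℕ → ZMod p)
    (α : LaurentSeries (ZMod p)) (a : ℕ → (ZMod p)[X]) (β : ℕ → LaurentSeries (ZMod p)) :
    Prop where
  hk : 1 ≤ k
  hkp : 2 * k < p
  hl : 1 ≤ l
  hs : s ≠ 0
  hodd : Odd p
  hcf : IsCFOf α a β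
  hc : ∀ i, Bq p k s i ^ p = Bq p k s (i + 1) * Pka k s + C (c i) * Qka k s
  c0 : c 0 = 2
  crec : ∀ i, k * s * c (i + 1) = c i

/-- The index `n` is regular: a relation holds between `β_n` and `β_{f(n)}`, `a_n` is
proportional to some `B_i`, and the degenerate case does not occur. -/
def Zc (p : ℕ) [Fact p.Prime] (l k : ℕ) (s : ZMod p) (c : ℕ → ZMod p)
    (a : ℕ → (ZMod p)[X]) (β : ℕ → LaurentSeries (ZMod p)) (n : ℕ) : Prop :=
  ∃ (e ε lam : ZMod p) (i : ℕ), e ≠ 0 ∧ FrobRel k s β n (fI l k n) e ε ∧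
    a n = C lam * Bq p k s i ∧ ε - lam * c i ≠ 0

/-- The index `n` is regular, and the relation at `f(n)` has the constant `ε_{f(n)}` that
makes the whole block produced by `a_n` regular. -/
def Yc (p : ℕ) [Fact p.Prime] (l k : ℕ) (s : ZMod p) (c : ℕ → ZMod p)
    (a : ℕ → (ZMod p)[X]) (β : ℕ → LaurentSeries (ZMod p)) (n : ℕ) : Prop :=
  ∃ (e ε lam e' ε' : ZMod p) (i : ℕ), e ≠ 0 ∧ e' ≠ 0 ∧ FrobRel k s β n (fI l k n) e ε ∧
    a n = C lam * Bq p k s i ∧ ε - lam * c i ≠ 0 ∧ k * s * e * ε' = ε ∧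
    FrobRel k s β (fI l k n) (fI l k (fI l k n)) e' ε'

section

variable {l k : ℕ} {s : ZMod p} {c : ℕ → ZMod p}
  {α : LaurentSeries (ZMod p)} {a : ℕ → (ZMod p)[X]} {β : ℕ → LaurentSeries (ZMod p)}

lemma Setup.ks (H : Setup p l k s c α a β) : (k : ZMod p) * s ≠ 0 :=
  mul_ne_zero (natCast_ne (by have := H.hk; omega) (by have := H.hkp; omega)) H.hs

/-- Passing from `n` to `n + 1`: the new constant is `-4 / (s (ε - λ c_i))`. -/
lemma Setup.next (H : Setup p l k s c α a β) {n : ℕ} (hn : 1 ≤ n) {e ε lam : ZMod p} {i : ℕ}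
    (he : e ≠ 0) (hrel : FrobRel k s β n (fI l k n) e ε) (ha : a n = C lam * Bq p k s i)
    (hδ : ε - lam * c i ≠ 0) : ∃ e' ε', e' ≠ 0 ∧
      FrobRel k s β (n + 1) (fI l k (n + 1)) e' ε' ∧ ε' * (ε - lam * c i) * s = -4 := by
  have hb := mul_Bq_pow (lam := lam) (H.hc i)
  rw [← ha] at hb
  obtain ⟨A, v, W, u, hR, hA1, hW, -, -, r3, q4⟩ :=
    block H.hk H.hkp H.hs he H.hcf hn (one_le_fI l k n) hrel hb hδ
  refine ⟨W ^ 2 * e⁻¹, W ^ 2 * e⁻¹ * A (2 * k),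
    mul_ne_zero (pow_ne_zero 2 hW) (inv_ne_zero he), ?_, ?_⟩
  · rw [fI_succ hn]; exact r3
  · have h0 := H.hc 0
    rw [Bq, H.c0] at h0
    have h1 := kappa H.hk h0 q4
    rw [← hA1]
    have h2 : W ^ 2 * e⁻¹ * A (2 * k) * (A 1 * e) * s = A 1 * A (2 * k) * W ^ 2 * s := by
      field_simp
    rw [h2, h1]; norm_num

/-- Regularity of the block produced by `a_n`. The constants of the relations inside the block
are `ε_{f(n)+j} = 2 (j - 1 - 2k) / A_j`, which gives `ε - 2 v_j = -2 j / A_j ≠ 0`. -/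
lemma Setup.step (H : Setup p l k s c α a β) {n : ℕ} (hn : 1 ≤ n)
    (hY : Yc p l k s c a β n) :
    (∀ j, j ≤ 2 * k → Zc p l k s c a β (fI l k n + j)) ∧
    (∃ e ε e' ε' : ZMod p, e ≠ 0 ∧ e' ≠ 0 ∧ FrobRel k s β (n + 1) (fI l k (n + 1)) e ε ∧
      k * s * e * ε' = ε ∧ FrobRel k s β (fI l k (n + 1)) (fI l k (fI l k (n + 1))) e' ε') ∧
    (a (fI l k n)).natDegree + 2 * k = p * (a n).natDegree ∧
    (∀ j, 1 ≤ j → j ≤ 2 * k → (a (fI l k n + j)).natDegree = 1) := by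
  have hk := H.hk
  have hkp := H.hkp
  obtain ⟨e, ε, lam, e', ε', i, he, he', hrel, ha, hδ, hε', hrel'⟩ := hY
  have hb := mul_Bq_pow (lam := lam) (H.hc i)
  rw [← ha] at hb
  set m := fI l k n with hm
  have hm1 : 1 ≤ m := one_le_fI l k n
  obtain ⟨A, v, W, u, hR, hA1, hW, r1, r2, r3, -⟩ :=
    block H.hk H.hkp H.hs he H.hcf hn hm1 hrel hb hδ
  have hlam : lam ≠ 0 := by
    rintro rfl
    have := (cf_adeg H.hcf hn).1
    rw [ha] at this; simp at this
  have hks := H.ks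
  have h2 : (2 : ZMod p) ≠ 0 := by
    have := natCast_ne (p := p) (n := 2) (by omega) (by omega)
    exact_mod_cast this
  have hA1ne := hR.ne 1 le_rfl (by omega)
  have ha' : a m = C (e⁻¹ * lam) * Bq p k s (i + 1) := by rw [r1, C_mul]; ring
  -- the defect at `f(n)` is `A₁ / (k s)`
  have hδ' : (ε' - e⁻¹ * lam * c (i + 1)) * (k * s) = A 1 := by
    have h3 := H.crec i
    apply mul_right_cancel₀ he
    rw [hA1, ← hε', ← h3]
    field_simp
  have hδ'0 : ε' - e⁻¹ * lam * c (i + 1) ≠ 0 := by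
    intro h0; rw [h0, zero_mul] at hδ'; exact hA1ne hδ'.symm
  have key : ∀ j, 1 ≤ j → j ≤ 2 * k → ∃ E ε, E ≠ 0 ∧
      FrobRel k s β (m + j) (fI l k (m + j)) E ε ∧ ε * A j = 2 * (j - 1 - 2 * k) := by
    intro j hj
    induction j, hj using Nat.le_induction with
    | base =>
      intro _
      obtain ⟨E, x, h3, h4, h5⟩ := H.next hm1 he' hrel' ha' hδ'0
      refine ⟨E, x, h3, h4, ?_⟩
      rw [← hδ']
      push_cast
      linear_combination (k : ZMod p) * h5
    | succ j hj ih =>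
      intro hjk
      obtain ⟨E, x, h3, h4, h5⟩ := ih (by omega)
      have hv := hR.val j hj (by omega)
      have hj0 : (j : ZMod p) ≠ 0 := natCast_ne (by omega) (by omega)
      have h6 : (x - v j * c 0) * A j = -2 * j := by
        rw [H.c0]; linear_combination h5 - 2 * hv
      have h7 : x - v j * c 0 ≠ 0 := by
        intro h0; rw [h0, zero_mul] at h6
        exact mul_ne_zero (neg_ne_zero.mpr h2) hj0 h6.symm
      obtain ⟨E', x', h8, h9, h10⟩ := H.next (by omega) h3 h4
        (by rw [Bq]; exact r2 j hj (by omega)) h7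
      refine ⟨E', x', h8, h9, ?_⟩
      have h11 := hR.mulrec j (by omega)
      have hAj := hR.ne j hj (by omega)
      apply mul_left_cancel₀ (mul_ne_zero (mul_ne_zero h2 hj0) H.hs)
      push_cast
      linear_combination (x' * s * A (j + 1)) * h6 - A j * A (j + 1) * h10 + 4 * h11
  have hdef : ∀ j, 1 ≤ j → j ≤ 2 * k → ∀ x : ZMod p, x * A j = 2 * (j - 1 - 2 * k) →
      (x - v j * c 0) * A j = -2 * j ∧ x - v j * c 0 ≠ 0 := by
    intro j hj hjk x hx
    have hv := hR.val j hj hjk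
    have h6 : (x - v j * c 0) * A j = -2 * j := by
      rw [H.c0]; linear_combination hx - 2 * hv
    refine ⟨h6, fun h0 => ?_⟩
    rw [h0, zero_mul] at h6
    exact mul_ne_zero (neg_ne_zero.mpr h2) (natCast_ne (by omega) (by omega)) h6.symm
  refine ⟨fun j hjk => ?_, ?_, ?_, fun j h3 h4 => ?_⟩
  · rcases Nat.eq_zero_or_pos j with rfl | hj
    · exact ⟨e', ε', _, _, he', hrel', ha', hδ'0⟩
    · obtain ⟨E, x, h3, h4, h5⟩ := key j hj hjk
      exact ⟨E, x, v j, 0, h3, h4, by rw [Bq]; exact r2 j hj hjk, (hdef j hj hjk x h5).2⟩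
  · obtain ⟨E, x, h3, h4, h5⟩ := key (2 * k) (by omega) le_rfl
    obtain ⟨h6, h7⟩ := hdef (2 * k) (by omega) le_rfl x h5
    obtain ⟨E', x', h8, h9, h10⟩ := H.next (by omega) h3 h4
      (by rw [Bq]; exact r2 (2 * k) (by omega) le_rfl) h7
    rw [show m + 2 * k + 1 = fI l k (n + 1) from (fI_succ hn).symm] at h9 r3
    refine ⟨_, _, E', x', mul_ne_zero (pow_ne_zero 2 hW) (inv_ne_zero he), h8, r3, ?_, h9⟩
    have h11 : k * s * x' = A (2 * k) := by
      apply mul_left_cancel₀ (mul_ne_zero h2 h2)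
      push_cast at h6
      linear_combination (x' * s) * h6 - A (2 * k) * h10
    rw [← h11]; ring
  · rw [r1, ha, natDegree_C_mul (inv_ne_zero he), natDegree_C_mul hlam, natDegree_C_mul hlam,
      Bq_natDegree _ H.hodd H.hk H.hkp]
  · rw [r2 j h3 h4, natDegree_C_mul_X _ (hR.v_ne hkp h3 h4)]

lemma Setup.blocks (H : Setup p l k s c α a β) (h1 : Yc p l k s c a β 1)
    (h0 : ∀ j, 1 ≤ j → j ≤ l → Zc p l k s c a β j) (N : ℕ) : DegBlock k l a N := by
  have all : ∀ n, 1 ≤ n → Yc p l k s c a β n := by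
    intro n
    induction n using Nat.strong_induction_on with
    | _ n ih =>
      intro hn
      rcases Nat.eq_or_lt_of_le hn with h | h
      · rw [← h]; exact h1
      obtain ⟨m, rfl⟩ : ∃ m, n = m + 1 := ⟨n - 1, by omega⟩
      have hZ : Zc p l k s c a β (m + 1) := by
        rcases Nat.lt_or_ge l (m + 1) with hl | hl
        · obtain ⟨q, j, hqj, hj⟩ : ∃ q j, (2 * k + 1) * q + j = m - l ∧ j < 2 * k + 1 :=
            ⟨_, _, Nat.div_add_mod _ _, Nat.mod_lt _ (by omega)⟩
          have hq : q ≤ (2 * k + 1) * q := Nat.le_mul_of_pos_left q (by omega)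
          have := H.hl
          have h2 := (H.step (n := q + 1) (by omega) (ih (q + 1) (by omega) (by omega))).1 j
            (by omega)
          have h3 : fI l k (q + 1) + j = m + 1 := by
            simp only [fI, Nat.add_sub_cancel]; omega
          rwa [h3] at h2
        · exact h0 _ (by omega) hl
      obtain ⟨e, ε, lam, i, he, hrel, ha, hδ⟩ := hZ
      obtain ⟨-, ⟨e₂, ε₂, e₃, ε₃, he₂, he₃, hrel₂, h4, hrel₃⟩, -⟩ :=
        H.step (n := m) (by omega) (ih m (by omega) (by omega))
      obtain ⟨rfl, rfl⟩ := hrel.unique H.hk H.hkp H.hcf (one_le_fI _ _ _) hrel₂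
      exact ⟨e, ε, lam, e₃, ε₃, i, he, he₃, hrel, ha, hδ, h4, hrel₃⟩
  obtain ⟨-, -, h3, h4⟩ := H.step (n := N + 1) (by omega) (all (N + 1) (by omega))
  exact ⟨h3, h4⟩

/-- A numerical criterion on the initial data `λ_j`, `e₁`, `ε_1` for the pattern of blocks. -/
lemma Setup.of_initial (H : Setup p l k s c α a β) {lam eps : ℕ → ZMod p} {e₁ : ZMod p}
    (he₁ : e₁ ≠ 0) (hrel : FrobRel k s β 1 (l + 1) e₁ (eps 1))
    (ha : ∀ j, 1 ≤ j → j ≤ l → a j = C (lam j) * X)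
    (heps : ∀ j, 1 ≤ j → j ≤ l → eps (j + 1) * (eps j - lam j * 2) * s = -4)
    (hlast : k * s * e₁ * eps (l + 1) = eps 1) : nu0 a = ((p : ℝ) - 2 * k - 1) / l := by
  have hk := H.hk
  have hkp := H.hkp
  have hl := H.hl
  have h2 : (2 : ZMod p) ≠ 0 := by
    have := natCast_ne (p := p) (n := 2) (by omega) (by omega)
    exact_mod_cast this
  have hδ : ∀ j, 1 ≤ j → j ≤ l → eps j - lam j * c 0 ≠ 0 := by
    intro j h3 h4 h0
    have h5 := heps j h3 h4
    rw [← H.c0, h0] at h5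
    have h6 : (2 : ZMod p) * 2 = 0 := by linear_combination h5
    exact mul_ne_zero h2 h2 h6
  have ha' : ∀ j, 1 ≤ j → j ≤ l → a j = C (lam j) * Bq p k s 0 := ha
  have hrels : ∀ j, 1 ≤ j → j ≤ l + 1 → ∃ e, e ≠ 0 ∧ FrobRel k s β j (fI l k j) e (eps j) := by
    intro j hj
    induction j, hj using Nat.le_induction with
    | base => intro _; exact ⟨e₁, he₁, hrel⟩
    | succ j hj ih =>
      intro hjl
      obtain ⟨e, he, h3⟩ := ih (by omega)
      obtain ⟨e', ε', h4, h5, h6⟩ := H.next hj he h3 (ha' j hj (by omega)) (hδ j hj (by omega))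
      have h7 := heps j hj (by omega)
      rw [← H.c0, ← h6] at h7
      have h8 := mul_right_cancel₀ (hδ j hj (by omega)) (mul_right_cancel₀ H.hs h7)
      exact ⟨e', h4, by rw [h8]; exact h5⟩
  have hZ : ∀ j, 1 ≤ j → j ≤ l → Zc p l k s c a β j := by
    intro j h3 h4
    obtain ⟨e, he, h5⟩ := hrels j h3 (by omega)
    exact ⟨e, eps j, lam j, 0, he, h5, ha' j h3 h4, hδ j h3 h4⟩
  have hY : Yc p l k s c a β 1 := by
    obtain ⟨e, he, h5⟩ := hrels (l + 1) (by omega) le_rfl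
    exact ⟨e₁, eps 1, lam 1, e, eps (l + 1), 0, he₁, he, hrel, ha' 1 le_rfl hl,
      hδ 1 le_rfl hl, hlast, h5⟩
  have hl' : (l : ℝ) ≠ 0 := by exact_mod_cast (by omega)
  refine nu0_eq hl H.hcf (H.blocks hY hZ) (E := 1) le_rfl (fun j h1 h2 => ?_) ?_ ?_
  · have h3 := (cf_adeg H.hcf h1).1
    rw [ha j h1 h2] at h3 ⊢
    apply natDegree_C_mul_X
    intro h0
    rw [h0] at h3; simp at h3
  · field_simp; push_cast; ring
  · apply div_nonneg _ (Nat.cast_nonneg l)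
    have : (2 * k + 1 : ℝ) ≤ p := by exact_mod_cast hkp
    linarith

end

/-- An equation of degree `p + 1` recognises the first `l` partial quotients. -/
lemma initial_rel {l k : ℕ} (hk : 1 ≤ k) (hkp : 2 * k < p) {s : ZMod p}
    {α : LaurentSeries (ZMod p)} {a : ℕ → (ZMod p)[X]} {β : ℕ → LaurentSeries (ZMod p)}
    (hcf : IsCFOf α a β) {lam : ℕ → ZMod p} {e ε : ZMod p} (he : e ≠ 0)
    (hlam : ∀ j, 1 ≤ j → j ≤ l → lam j ≠ 0)
    (h : α * (pEval (cnt lam 1 0 (l + 1)) * (α ^ p - pEval (C ε) * pEval (Qka k s))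
          + pEval (C e) * pEval (Pka k s) * pEval (cnt lam 1 0 l)) =
        pEval (cnt lam 0 1 (l + 1)) * (α ^ p - pEval (C ε) * pEval (Qka k s))
          + pEval (C e) * pEval (Pka k s) * pEval (cnt lam 0 1 l)) :
    (∀ j, 1 ≤ j → j ≤ l → a j = C (lam j) * X) ∧ FrobRel k s β 1 (l + 1) e ε := by
  have hP0 : pEval (Pka k s) ≠ 0 := pEval_ne (Pka_monic k s).ne_zero
  have he0 : pEval (C e) ≠ 0 := pEval_ne (C_ne_zero.mpr he)
  have hα := (hcf.2 1 le_rfl).2.1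
  rw [hcf.1] at hα
  have hγ := adeg_next hk hkp (s := s) (e := 1) one_ne_zero ε (u := α) hα he
  have h1 : pEval (C (1 : ZMod p)) = 1 := by simp [pEval_hom]
  rw [h1, one_mul] at hγ
  set γ := (α ^ p - pEval (C ε) * pEval (Qka k s)) / (pEval (C e) * pEval (Pka k s)) with hγd
  have hU : α ^ p - pEval (C ε) * pEval (Qka k s) = pEval (C e) * pEval (Pka k s) * γ := by
    rw [hγd]; field_simp
  have h2 : α * (pEval (cnt lam 1 0 (l + 1)) * γ + pEval (cnt lam 1 0 l)) =
      pEval (cnt lam 0 1 (l + 1)) * γ + pEval (cnt lam 0 1 l) := by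
    apply mul_left_cancel₀ (mul_ne_zero he0 hP0)
    rw [hU] at h
    linear_combination h
  have hdet := congrArg pEval (cnt_det lam l)
  have hden : pEval (cnt lam 1 0 (l + 1)) * γ + pEval (cnt lam 1 0 l) ≠ 0 := by
    intro h0
    rw [h0, mul_zero] at h2
    have h3 : pEval ((-1 : (ZMod p)[X]) ^ l) = 0 := by
      rw [← hdet]
      simp only [pEval_hom, map_sub, map_mul] at *
      linear_combination (pEvalHom (ZMod p) (cnt lam 0 1 (l + 1))) * h0
        + (pEvalHom (ZMod p) (cnt lam 1 0 (l + 1))) * h2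
    exact pEval_ne (pow_ne_zero l (neg_ne_zero.mpr one_ne_zero)) h3
  have h3 : β 1 = cfE lam l γ := by
    rw [hcf.1, cfE_eq lam l γ hlam hγ, eq_div_iff hden, h2]
  obtain ⟨r1, r2⟩ := cf_chain hcf le_rfl lam l γ hlam hγ h3
  refine ⟨fun j h4 h5 => ?_, ?_⟩
  · rw [← r1 j h4 h5]; congr 1; omega
  · rw [FrobRel, hcf.1, show l + 1 = 1 + l by ring, r2]
    linear_combination hU

lemma setup_exists {l k : ℕ} (hk : 1 ≤ k) (hkp : 2 * k < p) (hl : 1 ≤ l) (hodd : Odd p)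
    {s : ZMod p} (hs : s ≠ 0) {b : (ZMod p)[X]} (hb : X ^ p = b * Pka k s + C 2 * Qka k s)
    {α : LaurentSeries (ZMod p)} {a : ℕ → (ZMod p)[X]} {β : ℕ → LaurentSeries (ZMod p)}
    (hcf : IsCFOf α a β) : ∃ c, Setup p l k s c α a β := by
  obtain ⟨c, hc⟩ := Bq_rem s hodd hk hkp
  have h0 := (hc 0).1
  rw [Bq] at h0
  have c0 := c_zero_eq hk hkp h0 hb
  refine ⟨c, hk, hkp, hl, hs, hodd, hcf, fun i => (hc i).1, c0, fun i => ?_⟩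
  have h1 := Bq_rem_rec hk hkp hs hc i
  have h2 : (2 : ZMod p) ≠ 0 := by
    have := natCast_ne (p := p) (n := 2) (by omega) (by omega)
    exact_mod_cast this
  rw [c0] at h1
  apply mul_left_cancel₀ h2
  linear_combination h1

end Engine

/-! ### The quartic equation for `p = 7` and `p = 13` -/

section Quartic

lemma poly_char (p : ℕ) [Fact p.Prime] : (p : (ZMod p)[X]) = 0 := CharP.cast_eq_zero _ p

lemma laurent_char (p : ℕ) [Fact p.Prime] : (p : LaurentSeries (ZMod p)) = 0 := by
  have : CharP (LaurentSeries (ZMod p)) p :=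
    charP_of_injective_ringHom (HahnSeries.C : ZMod p →+* LaurentSeries (ZMod p)).injective p
  exact CharP.cast_eq_zero _ p

lemma Qka_eq {p : ℕ} [Fact p.Prime] {k : ℕ} (hk : 1 ≤ k) (hkp : 2 * k < p) {s : ZMod p}
    {f : (ZMod p)[X]} (hf : f.natDegree < p) (h : derivative f = Pka (k - 1) s)
    (h0 : f.eval 0 = 0) : Qka k s = f :=
  eq_of_derivative (by have := Qka_natDegree k hk s; omega) hf
    (by rw [h, Qka_derivative k hk hkp]) (by rw [h0, Qka, polyInt_eval])

lemma pEvalHom_X {F : Type} [Field F] : pEvalHom F X = Tval F := by simp [pEvalHom]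

/-- The leading coefficients of `a₁, a₂, a₃` for `p = 7`. -/
def lam7 : ℕ → ZMod 7
  | 1 => 2
  | 2 => 6
  | 3 => 6
  | _ => 0

/-- The constants `ε₁, …, ε₄` for `p = 7`. -/
def eps7 : ℕ → ZMod 7
  | 1 => 5
  | 2 => 4
  | 3 => 3
  | 4 => 5
  | _ => 0

lemma data7 : (∀ j, 1 ≤ j → j ≤ 3 → lam7 j ≠ 0) ∧
    (∀ j, 1 ≤ j → j ≤ 3 → eps7 (j + 1) * (eps7 j - lam7 j * 2) * 6 = -4) ∧
    (2 : ℕ) * 6 * 3 * eps7 (3 + 1) = eps7 1 ∧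
    (6 : ZMod 7) ≠ 0 ∧ (3 : ZMod 7) ≠ 0 := by
  refine ⟨?_, ?_, by decide, by decide, by decide⟩ <;> intro j h1 h2 <;>
    interval_cases j <;> decide

/-- For `p = 7` the root has `l = 3`, `k = 2` and `P = (T² - 1)²`; the quartic divides the
equation of degree `8` that encodes `α = [2T, 6T, 6T, β₄]`, `α⁷ = 3 P β₄ + 5 Q`. -/
lemma nu0_seven [Fact (Nat.Prime 7)] {α : LaurentSeries (ZMod 7)} {a : ℕ → (ZMod 7)[X]}
    {β : ℕ → LaurentSeries (ZMod 7)} (hcf : IsCFOf α a β)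
    (h : -α ^ 4 / 12 - Tval (ZMod 7) * α ^ 3 + α ^ 2 + 1 = 0) : nu0 a = 2 / 3 := by
  obtain ⟨d1, d2, d3, d4, d5⟩ := data7
  have hX : (7 : (ZMod 7)[X]) = 0 := poly_char 7
  have hK : (7 : LaurentSeries (ZMod 7)) = 0 := laurent_char 7
  have hinv : (12 : LaurentSeries (ZMod 7))⁻¹ = 3 :=
    inv_eq_of_mul_eq_one_right (by linear_combination 5 * hK)
  have hQ : Qka 2 (6 : ZMod 7) = 5 * X ^ 3 + 6 * X := by
    apply Qka_eq (by norm_num) (by norm_num)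
    · exact lt_of_le_of_lt (b := 3) (by compute_degree) (by norm_num)
    · simp only [Pka, map_ofNat, derivative_add, derivative_mul, derivative_ofNat,
        derivative_X_pow, derivative_X, Nat.cast_ofNat]
      linear_combination 2 * X ^ 2 * hX
    · simp
  have hb : (X : (ZMod 7)[X]) ^ 7 = (X ^ 3 + 2 * X) * Pka 2 6 + C 2 * Qka 2 6 := by
    rw [hQ]
    simp only [Pka, map_ofNat]
    linear_combination (-2 * X ^ 5 - 10 * X ^ 3 - 12 * X) * hX
  obtain ⟨c, H⟩ := setup_exists (l := 3) (by norm_num) (by norm_num) (by norm_num)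
    (by decide) d4 hb hcf
  have h2 : cnt lam7 0 1 4 = 2 * X ^ 3 + X := by
    simp only [cnt, lam7, map_ofNat]
    linear_combination (10 * X ^ 3 + X) * hX
  have h3 : cnt lam7 0 1 3 = 5 * X ^ 2 + 1 := by
    simp only [cnt, lam7, map_ofNat]
    linear_combination X ^ 2 * hX
  have h4 : cnt lam7 1 0 4 = X ^ 2 + 1 := by
    simp only [cnt, lam7, map_ofNat]
    linear_combination 5 * X ^ 2 * hX
  have h5 : cnt lam7 1 0 3 = 6 * X := by
    simp only [cnt, lam7, map_ofNat]
    ring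
  obtain ⟨h6, h7⟩ := initial_rel (l := 3) (k := 2) (s := 6) (e := 3) (ε := 5) (lam := lam7)
    (by norm_num) (by norm_num) hcf d5 d1 (by
      rw [hQ, h2, h3, h4, h5]
      simp only [pEval_hom, Pka, map_ofNat, map_add, map_mul, map_pow, map_one, pEvalHom_X]
      rw [div_eq_mul_inv, hinv] at h
      generalize Tval (ZMod 7) = t at h ⊢
      have h8 : 4 * α ^ 4 - t * α ^ 3 + α ^ 2 + 1 = 0 := by linear_combination h + α ^ 4 * hK
      linear_combination (2 * α ^ 4 * t ^ 2 + 2 * α ^ 4 + 2 * α ^ 3 * t + 3 * α ^ 2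
        + 2 * α * t + 4) * h8 + (-α ^ 8 * t ^ 2 - α ^ 8 - α ^ 7 * t - 2 * α ^ 6 - α ^ 5 * t
        - 3 * α ^ 4 - α ^ 2 - α * t ^ 5 + 23 * α * t ^ 3 + 88 * α * t + 5 * t ^ 6 - 14 * t ^ 4
        - 78 * t ^ 2 - 16) * hK)
  rw [H.of_initial (lam := lam7) (eps := eps7) (e₁ := 3) d5 h7 h6 d2 d3]
  norm_num

/-- The leading coefficients of `a₁, …, a₆` for `p = 13`. -/
def lam13 : ℕ → ZMod 13
  | 1 => 1
  | 2 => 12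
  | 3 => 7
  | 4 => 11
  | 5 => 8
  | 6 => 5
  | _ => 0

/-- The constants `ε₁, …, ε₇` for `p = 13`. -/
def eps13 : ℕ → ZMod 13
  | 1 => 4
  | 2 => 3
  | 3 => 9
  | 4 => 4
  | 5 => 4
  | 6 => 6
  | 7 => 5
  | _ => 0

lemma data13 : (∀ j, 1 ≤ j → j ≤ 6 → lam13 j ≠ 0) ∧
    (∀ j, 1 ≤ j → j ≤ 6 → eps13 (j + 1) * (eps13 j - lam13 j * 2) * 8 = -4) ∧
    (4 : ℕ) * 8 * 1 * eps13 (6 + 1) = eps13 1 ∧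
    (8 : ZMod 13) ≠ 0 ∧ (1 : ZMod 13) ≠ 0 := by
  refine ⟨?_, ?_, by decide, by decide, by decide⟩ <;> intro j h1 h2 <;>
    interval_cases j <;> decide

/-- For `p = 13` the root has `l = 6`, `k = 4` and `P = (T² + 8)⁴`; the quartic divides the
equation of degree `14` that encodes `α = [T, 12T, 7T, 11T, 8T, 5T, β₇]`,
`α¹³ = P β₇ + 4 Q`. -/
lemma nu0_thirteen [Fact (Nat.Prime 13)] {α : LaurentSeries (ZMod 13)} {a : ℕ → (ZMod 13)[X]}
    {β : ℕ → LaurentSeries (ZMod 13)} (hcf : IsCFOf α a β)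
    (h : -α ^ 4 / 12 - Tval (ZMod 13) * α ^ 3 + α ^ 2 + 1 = 0) : nu0 a = 2 / 3 := by
  obtain ⟨d1, d2, d3, d4, d5⟩ := data13
  have hX : (13 : (ZMod 13)[X]) = 0 := poly_char 13
  have hK : (13 : LaurentSeries (ZMod 13)) = 0 := laurent_char 13
  have hinv : (12 : LaurentSeries (ZMod 13))⁻¹ = 12 :=
    inv_eq_of_mul_eq_one_right (by linear_combination 11 * hK)
  have hQ : Qka 4 (8 : ZMod 13) = 2 * X ^ 7 + 10 * X ^ 5 + 12 * X ^ 3 + 5 * X := by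
    apply Qka_eq (by norm_num) (by norm_num)
    · exact lt_of_le_of_lt (b := 7) (by compute_degree) (by norm_num)
    · simp only [Pka, map_ofNat, derivative_add, derivative_mul, derivative_ofNat,
        derivative_X_pow, derivative_X, Nat.cast_ofNat]
      linear_combination (X ^ 6 + 2 * X ^ 4 - 12 * X ^ 2 - 39) * hX
    · simp
  have hb : (X : (ZMod 13)[X]) ^ 13 = (X ^ 5 + 7 * X ^ 3 + 3 * X) * Pka 4 8
      + C 2 * Qka 4 8 := by
    rw [hQ]
    simp only [Pka, map_ofNat]
    linear_combination (-3 * X ^ 11 - 47 * X ^ 9 - 372 * X ^ 7 - 1508 * X ^ 5 - 2680 * X ^ 3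
      - 946 * X) * hX
  obtain ⟨c, H⟩ := setup_exists (l := 6) (by norm_num) (by norm_num) (by norm_num)
    (by decide) d4 hb hcf
  have h2 : cnt lam13 0 1 7 = X ^ 6 + X ^ 4 + 11 * X ^ 2 + 1 := by
    simp only [cnt, lam13, map_ofNat, map_one]
    linear_combination (2843 * X ^ 6 + 411 * X ^ 4 + 13 * X ^ 2) * hX
  have h3 : cnt lam13 0 1 6 = 8 * X ^ 5 + 3 * X := by
    simp only [cnt, lam13, map_ofNat, map_one]
    linear_combination (568 * X ^ 5 + 68 * X ^ 3 + X) * hX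
  have h4 : cnt lam13 1 0 7 = X ^ 5 + 2 * X ^ 3 + 2 * X := by
    simp only [cnt, lam13, map_ofNat, map_one]
    linear_combination (2843 * X ^ 5 + 174 * X ^ 3 + 2 * X) * hX
  have h5 : cnt lam13 1 0 6 = 8 * X ^ 4 + 8 * X ^ 2 + 1 := by
    simp only [cnt, lam13, map_ofNat, map_one]
    linear_combination (568 * X ^ 4 + 20 * X ^ 2) * hX
  obtain ⟨h6, h7⟩ := initial_rel (l := 6) (k := 4) (s := 8) (e := 1) (ε := 4) (lam := lam13)
    (by norm_num) (by norm_num) hcf d5 d1 (by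
      rw [hQ, h2, h3, h4, h5]
      simp only [pEval_hom, Pka, map_ofNat, map_add, map_mul, map_pow, map_one, pEvalHom_X]
      rw [div_eq_mul_inv, hinv] at h
      generalize Tval (ZMod 13) = t at h ⊢
      have h8 : α ^ 4 - t * α ^ 3 + α ^ 2 + 1 = 0 := by linear_combination h + α ^ 4 * hK
      linear_combination (α ^ 10 * t ^ 5 + 2 * α ^ 10 * t ^ 3 + 2 * α ^ 10 * t + α ^ 9 * t ^ 4
        + 4 * α ^ 9 * t ^ 2 + 12 * α ^ 9 + 2 * α ^ 8 * t ^ 3 + 10 * α ^ 8 * t + α ^ 7 * t ^ 4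
        + 6 * α ^ 7 * t ^ 2 + α ^ 7 + 2 * α ^ 6 * t ^ 3 + 2 * α ^ 6 * t + 5 * α ^ 5 * t ^ 2
        + α ^ 4 * t ^ 3 + α ^ 4 * t + 3 * α ^ 3 * t ^ 2 + 12 * α ^ 3 + 9 * α ^ 2 * t
        + α * t ^ 2 + α + 4 * t) * h8 + (-α ^ 13 * t ^ 2 - α ^ 13 - α ^ 11 - α ^ 10 * t
        - α ^ 9 * t ^ 2 - α ^ 9 - α ^ 8 * t - α ^ 7 * t ^ 2 - α ^ 7 - α ^ 5 - α ^ 4 * t - α ^ 3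
        - α ^ 2 * t + 16 * α * t ^ 10 + 245 * α * t ^ 8 + 1484 * α * t ^ 6 + 3800 * α * t ^ 4
        + 2675 * α * t ^ 2 + 315 * α - 16 * t ^ 11 - 223 * t ^ 9 - 1228 * t ^ 7 - 2564 * t ^ 5
        - 452 * t ^ 3 - 944 * t) * hK)
  rw [H.of_initial (lam := lam13) (eps := eps13) (e₁ := 1) d5 h7 h6 d2 d3]
  norm_num

end Quartic

/-- **Corollary 3.** For a perfect continued fraction `α` of type
`(p, l, k)`: (i) if `a_j = λ_j A_{0,k}` for `1 ≤ j ≤ l` then `ν₀(α) = (p − 2k − 1)/l`;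
(ii) if `l = k = 1` and `a₁ = λ₁ A_{i,1}` then
`ν₀(α) = (p−1)(p^{i+1} − 3p^i)/(p^{i+1} − 3p^i + 2)`.  Consequently `ν(α) = 8/3` if `α` is
the root of `(1)` (with `|α| > 1`) for `p = 7` or `p = 13`. -/
theorem stmt15 (p : ℕ) [Fact p.Prime] (hodd : Odd p) :
    (∀ l k : ℕ, 1 ≤ l → 1 ≤ k → 2 * k < p →
      ∀ (α : LaurentSeries (ZMod p)) (a : ℕ → Polynomial (ZMod p))
        (β : ℕ → LaurentSeries (ZMod p)), PerfectType p l k α a β →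
        (∀ j, 1 ≤ j → j ≤ l → ∃ lam : ZMod p, lam ≠ 0 ∧
          a j = Polynomial.C lam * Aseq (ZMod p) p k 0) →
        nu0 a = ((p : ℝ) - 2 * k - 1) / l) ∧
    (∀ i : ℕ, ∀ (α : LaurentSeries (ZMod p)) (a : ℕ → Polynomial (ZMod p))
        (β : ℕ → LaurentSeries (ZMod p)), PerfectType p 1 1 α a β →
        (∃ lam : ZMod p, lam ≠ 0 ∧ a 1 = Polynomial.C lam * Aseq (ZMod p) p 1 i) →
        nu0 a = ((p : ℝ) - 1) * ((p : ℝ) ^ (i + 1) - 3 * (p : ℝ) ^ i)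
              / ((p : ℝ) ^ (i + 1) - 3 * (p : ℝ) ^ i + 2)) ∧
    ((p = 7 ∨ p = 13) →
      ∀ (α : LaurentSeries (ZMod p)) (a : ℕ → Polynomial (ZMod p))
        (β : ℕ → LaurentSeries (ZMod p)), IsCFOf α a β → 0 < adeg α →
        -α ^ 4 / 12 - Tval (ZMod p) * α ^ 3 + α ^ 2 + 1 = 0 →
        2 + nu0 a = 8 / 3) := by
  refine ⟨fun l k hl hk hkp α a β h h0 => part_one hodd hl hk hkp h h0,
    fun i α a β h h0 => part_two hodd i h h0, ?_⟩
  rintro (rfl | rfl) α a β hcf - h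
  · rw [nu0_seven hcf h]; norm_num
  · rw [nu0_thirteen hcf h]; norm_num
end
end

section
/- Let p ≥ 5 be a prime and let α ∈ F(p) be a perfect continued fraction of type (p, 1, 1) with first partial quotient a₁ = λ₁ A_{i,1} for some i ≥ 1. Then α is algebraic over F_p(T) of degree exactly p + 1. -/
/-!
Write `δ = α - a₁ = 1/α₂`. The hyperquadratic relation becomes
`(α^p - ε₂T)(α - a₁) = ε₁(T² - 1)`, a polynomial equation of degree `p + 1` for `α`, so only the
lower bound on the degree is at stake.

Over `F_p((1/T))` the polynomial of this equation is `X - α` times a factor `g` of degree `p`.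
Since `deg α = deg a₁ ≥ 2`, the relation forces `deg (δ α^j) ≤ 0` for `0 ≤ j ≤ p - 1`, and then
all roots of `g` have degree `1/p`, the degree of `T^{1/p}`; hence `g` is irreducible over
`F_p((1/T))`. Concretely, one passes to `α⁻¹`: in characteristic `p` the reciprocal polynomial of
`g` is `1 - ε₂TX^p + δX(1 - αX)^{p-1}`, and its multiple by `u = 1/T` is an Eisenstein polynomial
over `F_p[[u]]` (`eisenstein_laurent`, `exists_irreducible_cofactor`).

Thus any proper factor over `F_p(T)` that vanishes at `α⁻¹` is linear (`degree_lower_bound`), which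
is impossible because `α` has an infinite continued fraction expansion and is therefore
irrational (`IsCFOf.irrational`).
-/

noncomputable section
open Polynomial

/-! ### Degrees in `F((1/T))` -/

theorem Tval_eq (F : Type) [Field F] : Tval F = HahnSeries.single (-1 : ℤ) (1 : F) := by
  rw [Tval, HahnSeries.inv_single, inv_one]

theorem Tval_pow (F : Type) [Field F] (n : ℕ) :
    Tval F ^ n = HahnSeries.single (-(n : ℤ)) (1 : F) := by
  rw [Tval_eq, HahnSeries.single_pow]
  simp

theorem pEvalHom_apply {F : Type} [Field F] (f : F[X]) : pEvalHom F f = pEval f := rfl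

theorem pEval_coeff {F : Type} [Field F] (f : F[X]) (k : ℤ) :
    (pEval f).coeff k = if k ≤ 0 then f.coeff (-k).toNat else 0 := by
  rw [← pEvalHom_apply]
  induction f using Polynomial.induction_on' with
  | add f g hf hg =>
    rw [map_add, HahnSeries.coeff_add, hf, hg]
    split_ifs <;> simp
  | monomial n c =>
    rw [pEvalHom_apply, pEval, Polynomial.eval₂_monomial, Tval_pow, HahnSeries.C_apply,
      HahnSeries.single_mul_single, HahnSeries.coeff_single, Polynomial.coeff_monomial]
    split_ifs <;> first | (exfalso; omega) | simp

theorem pEval_order {F : Type} [Field F] {f : F[X]} (hf : f ≠ 0) :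
    (pEval f).order = -(f.natDegree : ℤ) := by
  have hc : (pEval f).coeff (-(f.natDegree : ℤ)) ≠ 0 := by
    rw [pEval_coeff]
    simpa using hf
  refine le_antisymm (HahnSeries.order_le_of_coeff_ne_zero hc) ?_
  rw [HahnSeries.le_order_iff_forall (fun h => hc (by rw [h]; simp))]
  intro j hj
  rw [pEval_coeff]
  split_ifs
  · exact Polynomial.coeff_eq_zero_of_natDegree_lt (by omega)
  · rfl

theorem pEval_ne_zero {F : Type} [Field F] {f : F[X]} (hf : f ≠ 0) : pEval f ≠ 0 := by
  intro h
  have := pEval_coeff f (-(f.natDegree : ℤ))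
  rw [h] at this
  simp at this
  exact hf (leadingCoeff_eq_zero.1 this.symm)

theorem pEvalHom_injective (F : Type) [Field F] : Function.Injective (pEvalHom F) :=
  (injective_iff_map_eq_zero _).2 fun f hf => by
    by_contra h
    exact pEval_ne_zero h hf

theorem order_inv_eq {F : Type} [Field F] {x : LaurentSeries F} (hx : x ≠ 0) :
    (x⁻¹).order = -x.order := by
  have h := HahnSeries.order_mul hx (inv_ne_zero hx)
  rw [mul_inv_cancel₀ hx, HahnSeries.order_one] at h
  omega

theorem ne_zero_of_adeg_pos {F : Type} [Field F] {x : LaurentSeries F} (hx : 0 < adeg x) :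
    x ≠ 0 := by
  rintro rfl
  simp [adeg] at hx

/-- The ring `F[[1/T]]` of integers of `F((1/T))`. -/
def intRing (F : Type) [Field F] : Subring (LaurentSeries F) :=
  (algebraMap (PowerSeries F) (LaurentSeries F)).range

theorem mem_intRing_of_order {F : Type} [Field F] {x : LaurentSeries F} (hx : 0 ≤ x.order) :
    x ∈ intRing F := by
  obtain ⟨n, hn⟩ := Int.eq_ofNat_of_zero_le hx
  exact ⟨_, LaurentSeries.X_order_mul_powerSeriesPart hn.symm⟩

/-- An element with an infinite continued fraction expansion is irrational: Euclid's algorithm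
would make the degrees of the denominators decrease forever. -/
theorem IsCFOf.irrational {F : Type} [Field F] {α : LaurentSeries F} {a : ℕ → F[X]}
    {β : ℕ → LaurentSeries F} (h : IsCFOf α a β) (N D : F[X]) (hD : D ≠ 0) :
    α * pEval D ≠ pEval N := by
  suffices H : ∀ (d m : ℕ) (N D : F[X]), 1 ≤ m → D ≠ 0 → D.natDegree = d →
      β m * pEval D ≠ pEval N by
    rw [← h.1]
    exact H _ 1 N D le_rfl hD rfl
  intro d
  induction d using Nat.strong_induction_on with
  | _ d ih =>
    intro m N D hm hD hd hN
    obtain ⟨-, -, hβ⟩ := h.2 m hm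
    obtain ⟨-, hpos, -⟩ := h.2 (m + 1) (by omega)
    have hβ0 := ne_zero_of_adeg_pos hpos
    have key : pEval (N - a m * D) = (β (m + 1))⁻¹ * pEval D := by
      rw [← pEvalHom_apply, map_sub, map_mul]
      simp only [pEvalHom_apply]
      rw [← hN, hβ]
      ring
    have hD' : N - a m * D ≠ 0 := by
      intro h0
      rw [h0, ← pEvalHom_apply, map_zero] at key
      exact mul_ne_zero (inv_ne_zero hβ0) (pEval_ne_zero hD) key.symm
    have hord := congrArg HahnSeries.order key
    rw [HahnSeries.order_mul (inv_ne_zero hβ0) (pEval_ne_zero hD), order_inv_eq hβ0,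
      pEval_order hD, pEval_order hD'] at hord
    unfold adeg at hpos
    refine ih _ ?_ (m + 1) D (N - a m * D) (by omega) hD' rfl ?_
    · omega
    · rw [key, mul_inv_cancel_left₀ hβ0]

/-! ### Degrees of the polynomials `A_{i,1}` -/

theorem Pk_one {F : Type} [Field F] : (Pk 1 : F[X]) = X ^ 2 - 1 := by simp [Pk]

theorem Qk_one {F : Type} [Field F] : (Qk 1 : F[X]) = X := by
  simp [Qk, Pk, polyInt]

theorem Aseq_natDegree_succ {F : Type} [Field F] (p i : ℕ) :
    (Aseq F p 1 (i + 1)).natDegree = p * (Aseq F p 1 i).natDegree - 2 := by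
  have h2 : (X ^ 2 - 1 : F[X]).natDegree = 2 := by compute_degree!
  have hm : (X ^ 2 - 1 : F[X]).Monic := by monicity!
  rw [Aseq, Pk_one, ← divByMonic_eq_div _ hm, natDegree_divByMonic _ hm, natDegree_pow, h2]

theorem Aseq_natDegree_pos {F : Type} [Field F] {p : ℕ} (hp : 5 ≤ p) (i : ℕ) :
    1 ≤ (Aseq F p 1 i).natDegree := by
  induction i with
  | zero => simp [Aseq]
  | succ i ih =>
    rw [Aseq_natDegree_succ]
    have := Nat.mul_le_mul hp ih
    omega

theorem Aseq_natDegree_ge {F : Type} [Field F] {p : ℕ} (hp : 5 ≤ p) {i : ℕ} (hi : 1 ≤ i) :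
    2 ≤ (Aseq F p 1 i).natDegree := by
  obtain ⟨j, rfl⟩ := Nat.exists_eq_add_of_le' hi
  rw [Aseq_natDegree_succ]
  have := Nat.mul_le_mul hp (Aseq_natDegree_pos (F := F) hp j)
  omega

/-! ### Irreducibility over `F((1/T))` -/

/-- Eisenstein's criterion at the prime `u` of `F[[u]]` for a polynomial of degree `p` with
constant coefficient `u`, unit leading coefficient and middle coefficients divisible by `u`,
followed by Gauss's lemma. -/
theorem eisenstein_laurent {F : Type} [Field F] {p : ℕ} (hp : 1 ≤ p) {ε : F} (hε : ε ≠ 0)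
    {E : (PowerSeries F)[X]} (hE : E.natDegree + 1 ≤ p) {H : (PowerSeries F)[X]}
    (hH : H = C PowerSeries.X * (1 + X * E) - C (PowerSeries.C ε) * X ^ p) :
    H.natDegree = p ∧ Irreducible (H.map (algebraMap (PowerSeries F) (LaurentSeries F))) := by
  have hc : ∀ n, n ≠ p → PowerSeries.X ∣ H.coeff n := by
    intro n hn
    rw [hH, coeff_sub, coeff_C_mul, coeff_C_mul, coeff_X_pow, if_neg hn, mul_zero, sub_zero]
    exact dvd_mul_right _ _
  have h0 : H.coeff 0 = PowerSeries.X := by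
    have : (0 : ℕ) ≠ p := by omega
    rw [hH, coeff_sub, coeff_C_mul, coeff_C_mul, coeff_X_pow, if_neg this]
    simp
  have hpunit : IsUnit (H.coeff p) := by
    rw [PowerSeries.isUnit_iff_constantCoeff, hH, coeff_sub, coeff_C_mul, coeff_C_mul,
      coeff_X_pow, if_pos rfl]
    simp [hε]
  have hXu : ¬ IsUnit (PowerSeries.X : PowerSeries F) := PowerSeries.X_prime.not_isUnit
  have hpX : ¬ (PowerSeries.X : PowerSeries F) ∣ H.coeff p := fun h =>
    hXu (isUnit_of_dvd_unit h hpunit)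
  have hdeg : H.natDegree = p := by
    refine le_antisymm ?_ (le_natDegree_of_ne_zero hpunit.ne_zero)
    have h1 : (1 + X * E).natDegree ≤ p := by
      refine (natDegree_add_le _ _).trans (max_le (by simp) ?_)
      refine natDegree_mul_le.trans ?_
      have := natDegree_X_le (R := PowerSeries F)
      omega
    rw [hH]
    refine (natDegree_sub_le _ _).trans (max_le ((natDegree_C_mul_le _ _).trans h1) ?_)
    exact (natDegree_C_mul_le _ _).trans (natDegree_X_pow_le p)
  have hprim : H.IsPrimitive := fun r hr =>
    isUnit_of_dvd_unit ((C_dvd_iff_dvd_coeff r H).1 hr p) hpunit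
  refine ⟨hdeg, (hprim.irreducible_iff_irreducible_map_fraction_map).1 ?_⟩
  have hE' : H.IsEisensteinAt (Ideal.span {PowerSeries.X}) := by
    refine ⟨?_, ?_, ?_⟩
    · rw [leadingCoeff, hdeg, Ideal.mem_span_singleton]
      exact hpX
    · intro n hn
      rw [Ideal.mem_span_singleton]
      exact hc n (by omega)
    · rw [h0, Ideal.span_singleton_pow, Ideal.mem_span_singleton]
      rintro ⟨c, hcx⟩
      refine hXu (IsUnit.of_mul_eq_one c ?_)
      refine mul_left_cancel₀ (PowerSeries.X_ne_zero (R := F)) ?_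
      rw [mul_one, ← mul_assoc, ← sq, ← hcx]
  exact hE'.irreducible
    ((Ideal.span_singleton_prime PowerSeries.X_ne_zero).2 PowerSeries.X_prime) hprim (by omega)

/-- If a polynomial over `k` becomes `(X - γ) G` over `L` with `G` irreducible and `γ ∉ k`, then
every nonzero polynomial over `k` vanishing at `γ` has degree at least `deg G + 1`. -/
theorem degree_lower_bound {k L : Type*} [Field k] [Field L] (φ : k →+* L) {γ : L} {f m : k[X]}
    {G : L[X]} (hG : Irreducible G) (hf : f.map φ = (X - C γ) * G) (hγ : ∀ c, φ c ≠ γ)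
    (hm : m ≠ 0) (hmγ : m.eval₂ φ γ = 0) : G.natDegree + 1 ≤ m.natDegree := by
  let := φ.toAlgebra
  have hint : IsIntegral k γ := isAlgebraic_iff_isIntegral.1 ⟨m, hm, hmγ⟩
  set q := minpoly k γ with hq
  have hqm : q.natDegree ≤ m.natDegree := natDegree_le_of_dvd (minpoly.dvd k γ hmγ) hm
  refine le_trans ?_ hqm
  have hqf : q ∣ f := by
    refine minpoly.dvd k γ ?_
    rw [aeval_def, eval₂_eq_eval_map]
    change (f.map φ).eval γ = 0
    simp [hf]
  have hroot : (q.map φ).IsRoot γ := by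
    rw [IsRoot, eval_map]
    exact minpoly.aeval k γ
  obtain ⟨M, hM⟩ := dvd_iff_isRoot.2 hroot
  have hq0 : q.map φ ≠ 0 := Polynomial.map_ne_zero (minpoly.ne_zero hint)
  have hM0 : M ≠ 0 := by
    rintro rfl
    exact hq0 (by rw [hM, mul_zero])
  have hdeg : q.natDegree = 1 + M.natDegree := by
    rw [← natDegree_map φ, hM, natDegree_mul (X_sub_C_ne_zero γ) hM0, natDegree_X_sub_C]
  have hMG : M ∣ G := by
    have := Polynomial.map_dvd φ hqf
    rw [hM, hf] at this
    exact (mul_dvd_mul_iff_left (X_sub_C_ne_zero γ)).1 this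
  rcases hG.dvd_iff.1 hMG with hu | ha
  · exfalso
    rw [natDegree_eq_zero_of_isUnit hu] at hdeg
    obtain ⟨c, hc⟩ := (minpoly.natDegree_eq_one_iff).1 hdeg
    exact hγ c hc
  · rw [hdeg, natDegree_eq_of_degree_eq (degree_eq_degree_of_associated ha.symm), add_comm]

/-- The cofactor of `X - α⁻¹` in the equation satisfied by `α⁻¹` is irreducible over `F((1/T))`.
Here `δ = 1/α₂`, and integrality of `δ α^{p-1}` is what the bound `deg a₁ ≥ 2` provides. -/
theorem exists_irreducible_cofactor {p : ℕ} [Fact p.Prime] {α δ : LaurentSeries (ZMod p)}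
    {b : (ZMod p)[X]} {ε₁ ε₂ : ZMod p} (hε₂ : ε₂ ≠ 0) (hα0 : α ≠ 0)
    (hα : α = pEval b + δ)
    (hδ : δ * (α ^ p - HahnSeries.C ε₂ * Tval (ZMod p)) =
      HahnSeries.C ε₁ * (Tval (ZMod p) ^ 2 - 1))
    (hint : ∀ j ≤ p - 1, δ * α ^ j ∈ intRing (ZMod p)) :
    ∃ G : (LaurentSeries (ZMod p))[X], Irreducible G ∧ G.natDegree = p ∧
      ((1 - C (C ε₂ * X) * X ^ p) * (1 - C b * X) -
        C (C ε₁ * (X ^ 2 - 1)) * X ^ (p + 1) : (ZMod p)[X][X]).map (pEvalHom (ZMod p)) =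
      (X - C α⁻¹) * G := by
  have hp1 : 1 ≤ p := (Fact.out : p.Prime).one_lt.le
  set T := Tval (ZMod p) with hT
  have hT0 : T ≠ 0 := by
    rw [hT, Tval_eq]
    simp
  -- the polynomial `δ (1 - αX)^{p-1}` has coefficients in `F[[1/T]]`
  have hlift : C δ * (1 - C α * X) ^ (p - 1) ∈
      lifts (algebraMap (PowerSeries (ZMod p)) (LaurentSeries (ZMod p))) := by
    rw [lifts_iff_coeff_lifts]
    intro n
    have hcomp : (1 - C α * X : (LaurentSeries (ZMod p))[X]) ^ (p - 1) =
        ((1 + X) ^ (p - 1)).comp (C (-α) * X) := by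
      rw [pow_comp, add_comp, one_comp, X_comp, map_neg]
      ring
    rw [coeff_C_mul, hcomp, comp_C_mul_X_coeff, coeff_one_add_X_pow]
    change _ ∈ intRing (ZMod p)
    by_cases hn : n ≤ p - 1
    · have : δ * (((p - 1).choose n : LaurentSeries (ZMod p)) * (-α) ^ n) =
          ((p - 1).choose n : LaurentSeries (ZMod p)) * (-1) ^ n * (δ * α ^ n) := by
        rw [neg_pow]
        ring
      rw [this]
      exact mul_mem (mul_mem (natCast_mem _ _) (pow_mem (neg_mem (one_mem _)) _)) (hint n hn)
    · rw [Nat.choose_eq_zero_of_lt (by omega)]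
      simp [zero_mem]
  obtain ⟨E, hE⟩ := (mem_lifts _).1 hlift
  have hEdeg : E.natDegree + 1 ≤ p := by
    have h1 : E.natDegree ≤ p - 1 := by
      rw [← natDegree_map_eq_of_injective
        (IsFractionRing.injective (PowerSeries (ZMod p)) (LaurentSeries (ZMod p))) E, hE]
      compute_degree
    omega
  obtain ⟨hHdeg, hHirr⟩ := eisenstein_laurent hp1 hε₂ hEdeg rfl
  set H := C PowerSeries.X * (1 + X * E) - C (PowerSeries.C ε₂) * X ^ p with hH
  have hc : -α * T ≠ 0 := mul_ne_zero (neg_ne_zero.2 hα0) hT0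
  refine ⟨C (-α * T) * H.map (algebraMap (PowerSeries (ZMod p)) (LaurentSeries (ZMod p))),
    ?_, ?_, ?_⟩
  · exact (irreducible_isUnit_mul (isUnit_C.2 hc.isUnit)).2 hHirr
  · rw [natDegree_C_mul hc, natDegree_map_eq_of_injective
      (IsFractionRing.injective (PowerSeries (ZMod p)) (LaurentSeries (ZMod p))), hHdeg]
  · have hTu : C T * C (algebraMap (PowerSeries (ZMod p)) (LaurentSeries (ZMod p))
        PowerSeries.X) = 1 := by
      rw [← C_mul, LaurentSeries.coe_algebraMap, PowerSeries.coe_X, hT, Tval,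
        inv_mul_cancel₀ (by simp), C_1]
    have hαγ : C α * C α⁻¹ = 1 := by rw [← C_mul, mul_inv_cancel₀ hα0, C_1]
    have hCC : (algebraMap (PowerSeries (ZMod p)) (LaurentSeries (ZMod p)))
        (PowerSeries.C ε₂) = HahnSeries.C ε₂ := by
      rw [LaurentSeries.coe_algebraMap, PowerSeries.coe_C]
    have : CharP (LaurentSeries (ZMod p)) p :=
      charP_of_injective_ringHom (HahnSeries.C_injective (Γ := ℤ) (R := ZMod p)) p
    have hfrob : (1 - C α * X : (LaurentSeries (ZMod p))[X]) ^ (p - 1) * (1 - C α * X) =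
        1 - C α ^ p * X ^ p := by
      rw [← pow_succ, Nat.sub_add_cancel hp1, sub_pow_char, one_pow, mul_pow]
    have hδ' := congrArg (C : LaurentSeries (ZMod p) → _) hδ
    have hb : pEval b = α - δ := by rw [hα]; ring
    have hX : pEvalHom (ZMod p) X = T := by simp [pEvalHom, hT]
    have hCe : ∀ e, pEvalHom (ZMod p) (C e) = HahnSeries.C e := by simp [pEvalHom]
    simp only [hH, Polynomial.map_sub, Polynomial.map_mul, Polynomial.map_add, Polynomial.map_one,
      Polynomial.map_pow, map_C, map_X, hE, hCC, hX, hCe, pEvalHom_apply b, hb, map_mul, map_sub,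
      map_pow, map_one, map_neg] at hδ' ⊢
    generalize (C (algebraMap (PowerSeries (ZMod p)) (LaurentSeries (ZMod p))
        PowerSeries.X)) = u at *
    generalize (1 - C α * X : (LaurentSeries (ZMod p))[X]) ^ (p - 1) = W at *
    have e1 : (X - C α⁻¹) * (-C α * C T * (u * (1 + X * (C δ * W)) - C (HahnSeries.C ε₂) * X ^ p))
        = (1 - C α * X) * (1 - C T * C (HahnSeries.C ε₂) * X ^ p)
          + X * C δ * (W * (1 - C α * X)) := by
      linear_combination (C T * u * (1 + X * C δ * W) - C T * C (HahnSeries.C ε₂) * X ^ p) * hαγ +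
        (1 - C α * X) * (1 + X * C δ * W) * hTu
    rw [e1, hfrob]
    linear_combination X ^ (p + 1) * hδ'

/-! ### The degree of `α` -/

/-- Let `p ≥ 5` be prime and `α ∈ F(p)` a perfect continued fraction of
type `(p, 1, 1)` with `a₁ = λ₁ A_{i,1}`, `i ≥ 1`. Then `α` is algebraic over `F_p(T)` of
degree exactly `p + 1` (witnessed by polynomial relations with coefficients in
`F_p[T]`). -/
theorem stmt16 (p : ℕ) [Fact p.Prime] (hp : 5 ≤ p) (i : ℕ) (hi : 1 ≤ i)
    (α : LaurentSeries (ZMod p)) (a : ℕ → Polynomial (ZMod p))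
    (β : ℕ → LaurentSeries (ZMod p)) (hperf : PerfectType p 1 1 α a β)
    (ha1 : ∃ lam : ZMod p, lam ≠ 0 ∧ a 1 = Polynomial.C lam * Aseq (ZMod p) p 1 i) :
    (∃ P : Polynomial (Polynomial (ZMod p)), P ≠ 0 ∧ P.natDegree = p + 1 ∧
      Polynomial.eval₂ (pEvalHom (ZMod p)) α P = 0) ∧
    ∀ P : Polynomial (Polynomial (ZMod p)), P ≠ 0 →
      Polynomial.eval₂ (pEvalHom (ZMod p)) α P = 0 → p + 1 ≤ P.natDegree := by
  obtain ⟨hcf, ⟨ε₁, ε₂, -, hε₂, heq⟩, -⟩ := hperf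
  obtain ⟨lam, hlam, ha⟩ := ha1
  obtain ⟨-, hαpos, hα⟩ := hcf.2 1 le_rfl
  obtain ⟨-, hβpos, -⟩ := hcf.2 2 (by omega)
  rw [hcf.1] at hα hαpos
  rw [one_add_one_eq_two] at hα heq
  have hβ0 := ne_zero_of_adeg_pos hβpos
  have hα0 := ne_zero_of_adeg_pos hαpos
  have hdeg : 2 ≤ (a 1).natDegree := by
    rw [ha, natDegree_C_mul hlam]
    exact Aseq_natDegree_ge hp hi
  have ha0 : a 1 ≠ 0 := by
    intro h
    simp [h] at hdeg
  have hX : pEvalHom (ZMod p) X = Tval (ZMod p) := by simp [pEvalHom]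
  have hCe : ∀ e, pEvalHom (ZMod p) (C e) = HahnSeries.C e := by simp [pEvalHom]
  rw [Pk_one, Qk_one, ← pEvalHom_apply, ← pEvalHom_apply, map_sub, map_pow, map_one, hX] at heq
  set T := Tval (ZMod p) with hT
  have hT0 : T ≠ 0 := by
    rw [hT, Tval_eq]
    simp
  set δ := (β 2)⁻¹ with hδdef
  have hδ0 : δ ≠ 0 := inv_ne_zero hβ0
  have hδord : 0 < δ.order := by
    rw [hδdef, order_inv_eq hβ0]
    exact hβpos
  have hδ : δ * (α ^ p - HahnSeries.C ε₂ * T) = HahnSeries.C ε₁ * (T ^ 2 - 1) := by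
    rw [heq, hδdef]
    field_simp
    ring
  -- `deg α = deg a₁ ≥ 2`
  have hαord : α.order ≤ -2 := by
    have hc : α.coeff (-((a 1).natDegree : ℤ)) ≠ 0 := by
      rw [hα, HahnSeries.coeff_add, HahnSeries.coeff_eq_zero_of_lt_order (x := δ) (by omega),
        add_zero, pEval_coeff]
      simpa using ha0
    have := HahnSeries.order_le_of_coeff_ne_zero hc
    omega
  have hTord : ∀ n : ℕ, (T ^ n).order = -(n : ℤ) := fun n => by
    rw [hT, Tval_pow, HahnSeries.order_single one_ne_zero]
  have hTα : ∀ n : ℕ, n ≤ 2 → T ^ n * α⁻¹ ∈ intRing (ZMod p) := fun n hn => by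
    refine mem_intRing_of_order ?_
    rw [HahnSeries.order_mul (pow_ne_zero n hT0) (inv_ne_zero hα0), hTord, order_inv_eq hα0]
    omega
  have hδmem : δ ∈ intRing (ZMod p) := mem_intRing_of_order hδord.le
  have hCmem : ∀ e : ZMod p, HahnSeries.C e ∈ intRing (ZMod p) := fun e =>
    mem_intRing_of_order (by rw [HahnSeries.order_C])
  have hint : ∀ j ≤ p - 1, δ * α ^ j ∈ intRing (ZMod p) := by
    intro j hj
    -- dividing the equation for `δ` by `α` bounds `δ α^{p-1}`
    have h1 : δ * α ^ (p - 1) = HahnSeries.C ε₁ * (T ^ 2 * α⁻¹ - T ^ 0 * α⁻¹)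
        + HahnSeries.C ε₂ * δ * (T ^ 1 * α⁻¹) := by
      have h2 : α ^ p = α ^ (p - 1) * α := by rw [← pow_succ, Nat.sub_add_cancel (by omega)]
      rw [h2] at hδ
      field_simp
      linear_combination hδ
    have h3 : δ * α ^ j = δ * α ^ (p - 1) * (T ^ 0 * α⁻¹) ^ (p - 1 - j) := by
      obtain ⟨m, hm⟩ := Nat.exists_eq_add_of_le hj
      rw [hm, Nat.add_sub_cancel_left, pow_add, pow_zero, one_mul, inv_pow]
      field_simp
    rw [h3, h1]
    exact mul_mem (add_mem (mul_mem (hCmem _) (sub_mem (hTα 2 le_rfl) (hTα 0 (by omega))))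
      (mul_mem (mul_mem (hCmem _) hδmem) (hTα 1 (by omega)))) (pow_mem (hTα 0 (by omega)) _)
  constructor
  · refine ⟨(X ^ p - C (C ε₂ * X)) * (X - C (a 1)) - C (C ε₁ * (X ^ 2 - 1)), ?_⟩
    have hd1 : ((X ^ p - C (C ε₂ * X)) * (X - C (a 1)) : (ZMod p)[X][X]).natDegree = p + 1 := by
      rw [Monic.natDegree_mul (monic_X_pow_sub_C _ (by omega)) (monic_X_sub_C _),
        natDegree_X_pow_sub_C, natDegree_X_sub_C]
    have hd : ((X ^ p - C (C ε₂ * X)) * (X - C (a 1)) - C (C ε₁ * (X ^ 2 - 1)) :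
        (ZMod p)[X][X]).natDegree = p + 1 := by
      rw [natDegree_sub_C, hd1]
    refine ⟨fun h => ?_, hd, ?_⟩
    · rw [h, natDegree_zero] at hd
      omega
    · have hb : pEval (a 1) = α - δ := by rw [hα]; ring
      simp only [eval₂_sub, eval₂_mul, eval₂_pow, eval₂_X, eval₂_C, eval₂_one, map_mul, map_sub, map_pow,
        map_one, hX, hCe, pEvalHom_apply (a 1), hb]
      linear_combination hδ
  · intro P hP hPα
    obtain ⟨G, hG, hGdeg, hfG⟩ := exists_irreducible_cofactor hε₂ hα0 hα hδ hint
    -- `F_p(T)` as a subfield of `F((1/T))`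
    let φ : FractionRing (ZMod p)[X] →+* LaurentSeries (ZMod p) :=
      IsFractionRing.lift (pEvalHom_injective (ZMod p))
    have hφ' : ∀ x, φ (algebraMap (ZMod p)[X] _ x) = pEval x := fun x =>
      IsFractionRing.lift_algebraMap _ x
    have hφ : φ.comp (algebraMap (ZMod p)[X] (FractionRing (ZMod p)[X])) = pEvalHom (ZMod p) :=
      RingHom.ext hφ'
    rw [← hφ, ← Polynomial.map_map] at hfG
    have hirr : ∀ c, φ c ≠ α⁻¹ := by
      intro c hc
      obtain ⟨x, y, hy, rfl⟩ := IsFractionRing.div_surjective (A := (ZMod p)[X]) c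
      have hy0 : y ≠ 0 := nonZeroDivisors.ne_zero hy
      rw [map_div₀, hφ', hφ'] at hc
      have hx0 : x ≠ 0 := by
        rintro rfl
        rw [← pEvalHom_apply, map_zero, zero_div] at hc
        exact inv_ne_zero hα0 hc.symm
      refine hcf.irrational y x hx0 ?_
      have := pEval_ne_zero hy0
      field_simp at hc
      rw [mul_comm]
      exact hc
    let : Invertible α := invertibleOfNonzero hα0
    have hrev : P.reverse.eval₂ (pEvalHom (ZMod p)) α⁻¹ = 0 := by
      rw [← invOf_eq_inv, eval₂_reverse_eq_zero_iff]
      exact hPα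
    have hinj := IsFractionRing.injective (ZMod p)[X] (FractionRing (ZMod p)[X])
    have := degree_lower_bound φ (m := P.reverse.map (algebraMap _ _)) hG hfG hirr
      ((Polynomial.map_ne_zero_iff hinj).2 (by simpa using hP)) (by rw [eval₂_map, hφ, hrev])
    rw [hGdeg, natDegree_map_eq_of_injective hinj] at this
    exact this.trans (reverse_natDegree_le P)
end
end
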